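/- arXiv:math/0306435 — 3 statements merged into one kernel-verified Lean document; each statement's English description precedes it below -/
import Mathlib

section
/- Over F₂, the fixed-point space W of the involution u ↦ ū on Λ²(F₄⁴) (defined from the standard hermitian form and w = e₁∧e₂∧e₃∧e₄) is a 6-dimensional F₂-vector space, and the quadratic form ψ on W defined by γ₂(u) = ψ(u)·w is the non-split (anisotropic-discriminant) quadratic form of rank 6 over F₂; equivalently, (W, ψ) is an orthogonal direct sum of three non-split planes. -/
/-!
Write `P i = e₀ ∧ eᵢ₊₁` and let `Q i` be the wedge of the two complementary basis vectors. In
characteristic two `ι u` and `ι v` commute, so no signs occur: `P i * Q j = δᵢⱼ w`, while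
`P i * P j = Q i * Q j = 0` (`P_mul_Q`, `P_mul_P`, `Q_mul_Q`). As `w ≠ 0` (`top_ne_zero`) and the
six elements span (`span_P_Q`), every element of `Λ²` is uniquely
`T (a, b) = ∑ aᵢ P i + ∑ bᵢ Q i`.

Since the `P i`, `Q i` are orthonormal for `B`, the involution is `T (a, b) ↦ T (σ b, σ a)`, and
`ψ (T (a, b)) = ∑ aᵢ bᵢ`. Hence `W = {T (a, σ a)}` has `4³` elements, and on it `ψ` is
`∑ aᵢ ^ 3`, the orthogonal sum of three copies of the norm form `F₄ → F₂`, that is, of three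
non-split planes.

A norm `aᵢ ^ 3` is `0` or `1` according as `aᵢ` vanishes or not, so a nonzero singular vector
has exactly one vanishing coordinate. In a totally singular subgroup of order 8 each coordinate
vanishes at some nonzero element by the pigeonhole principle, and additivity forces this element
to be unique, which leaves at most `1 + 3` elements (`no_singular_card_eight`).
-/

open ExteriorAlgebra

namespace HermitianWedge

/-! ### Singular subgroups of the sum of three norm forms -/

lemma sum_three {A : Type*} [AddCommMonoid A] {i j k : Fin 3} (hij : i ≠ j) (hik : i ≠ k)
    (hjk : j ≠ k) (g : Fin 3 → A) :
    ∑ l, g l = g i + g j + g k := by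
  have huniv : (Finset.univ : Finset (Fin 3)) = {i, j, k} := by
    clear g; revert i j k; decide
  rw [huniv, Finset.sum_insert (by simp [hij, hik]), Finset.sum_pair hjk, add_assoc]

section Cubes

variable {K : Type*} [Field K] [Fintype K]

lemma charP_two (hcard : Fintype.card K = 4) : CharP K 2 := by
  have h4 : (4 : K) = 0 := by
    have := Nat.cast_card_eq_zero K
    rw [hcard] at this
    exact_mod_cast this
  have h2 : (2 : K) = 0 := by
    have : (2 : K) * 2 = 0 := by rw [← h4]; norm_num
    simpa using this
  exact CharTwo.of_one_ne_zero_of_two_eq_zero one_ne_zero h2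

lemma cube_eq_one (hcard : Fintype.card K = 4) {x : K} (hx : x ≠ 0) : x ^ 3 = 1 := by
  have := FiniteField.pow_card_sub_one_eq_one x hx
  rwa [hcard] at this

/-- The norm form `x ↦ x ^ 3` of `F₄` over `F₂`, summed over three coordinates, admits no totally
singular additive subgroup of order 8. The coordinates `f` need only be jointly injective on the
subgroup. -/
lemma no_singular_card_eight (hcard : Fintype.card K = 4) {M : Type*} [AddCommGroup M]
    (S : AddSubgroup M) (hS : Nat.card S = 8) (f : Fin 3 → M →+ K)
    (hinj : ∀ s ∈ S, (∀ i, f i s = 0) → s = 0)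
    (hsing : ∀ s ∈ S, ∑ i, f i s ^ 3 = 0) : False := by
  classical
  have := charP_two hcard
  have hsub : ∀ a b : K, a + b = 0 → a = b := fun a b h => CharTwo.add_eq_zero.mp h
  have hfin : Finite S := Nat.finite_of_card_ne_zero (by omega)
  -- The coordinate `f i` maps 8 elements into 4, so it has a nontrivial kernel on `S`.
  have hpig : ∀ i, ∃ s ∈ S, s ≠ 0 ∧ f i s = 0 := by
    intro i
    by_contra! hno
    have hi : Function.Injective (fun s : S => f i s) := by
      intro s t hst
      by_contra hne
      refine hno (s - t) (S.sub_mem s.2 t.2) ?_ ?_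
      · rwa [sub_ne_zero, Ne, Subtype.coe_inj]
      · simpa [sub_eq_zero] using hst
    have := Nat.card_le_card_of_injective _ hi
    rw [hS, Nat.card_eq_fintype_card, hcard] at this
    omega
  have hsome : ∀ s ∈ S, ∀ i j k : Fin 3, i ≠ j → i ≠ k → j ≠ k →
      f i s = 0 ∨ f j s = 0 ∨ f k s = 0 := by
    intro s hs i j k hij hik hjk
    by_contra! hne
    have h := hsing s hs
    rw [sum_three hij hik hjk, cube_eq_one hcard hne.1, cube_eq_one hcard hne.2.1,
      cube_eq_one hcard hne.2.2, CharTwo.add_self_eq_zero, zero_add] at h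
    exact one_ne_zero h
  have htwo : ∀ s ∈ S, ∀ i j, i ≠ j → f i s = 0 → f j s = 0 → s = 0 := by
    intro s hs i j hij hi hj
    refine hinj s hs fun k => ?_
    by_cases hik : i = k
    · rw [← hik, hi]
    by_cases hjk : j = k
    · rw [← hjk, hj]
    have h := hsing s hs
    rw [sum_three hij hik hjk, hi, hj] at h
    simpa using h
  -- Two nonzero members with different vanishing coordinates agree in the remaining one,
  -- since their sum must have a vanishing coordinate.
  have hagree : ∀ s ∈ S, ∀ t ∈ S, s ≠ 0 → t ≠ 0 → ∀ i j k, i ≠ j → i ≠ k → j ≠ k →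
      f i s = 0 → f j t = 0 → f k s = f k t := by
    intro s hs t ht hs0 ht0 i j k hij hik hjk hi hj
    have hi' : f i (s + t) ≠ 0 := by
      rw [map_add, hi, zero_add]
      exact fun h => ht0 (htwo t ht i j hij h hj)
    have hj' : f j (s + t) ≠ 0 := by
      rw [map_add, hj, add_zero]
      exact fun h => hs0 (htwo s hs i j hij hi h)
    apply hsub
    rw [← map_add]
    have h := hsome _ (S.add_mem hs ht) i j k hij hik hjk
    tauto
  -- Two nonzero members vanishing at the same coordinate are both compared, in each other
  -- coordinate `k`, with a member vanishing at the third coordinate.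
  have huniq : ∀ i, ∀ s ∈ S, ∀ t ∈ S, s ≠ 0 → t ≠ 0 → f i s = 0 → f i t = 0 → s = t := by
    intro i s hs t ht hs0 ht0 hi hi'
    rw [← sub_eq_zero]
    refine hinj _ (S.sub_mem hs ht) fun k => ?_
    rw [map_sub, sub_eq_zero]
    by_cases hik : i = k
    · rw [← hik, hi, hi']
    · obtain ⟨j, hij, hjk⟩ : ∃ j, i ≠ j ∧ j ≠ k := by clear hi hi'; revert i k; decide
      obtain ⟨r, hr, hr0, hrj⟩ := hpig j
      rw [hagree s hs r hr hs0 hr0 i j k hij hik hjk hi hrj,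
        hagree t ht r hr ht0 hr0 i j k hij hik hjk hi' hrj]
  choose r hr hr0 hri using hpig
  have hsub4 : (S : Set M) ⊆ (({0, r 0, r 1, r 2} : Finset M) : Set M) := by
    intro s hs
    by_cases h0 : s = 0
    · simp [h0]
    · rcases hsome s hs 0 1 2 (by decide) (by decide) (by decide) with h | h | h
      · simp [huniq 0 s hs _ (hr 0) h0 (hr0 0) h (hri 0)]
      · simp [huniq 1 s hs _ (hr 1) h0 (hr0 1) h (hri 1)]
      · simp [huniq 2 s hs _ (hr 2) h0 (hr0 2) h (hri 2)]
  have h1 := Set.ncard_le_ncard hsub4 (Finset.finite_toSet _)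
  rw [Set.ncard_coe_finset] at h1
  have h2 : (S : Set M).ncard = 8 := hS
  have h3 : ({0, r 0, r 1, r 2} : Finset M).card ≤ 4 := Finset.card_le_four
  omega

end Cubes

/-! ### Coordinates on the second exterior power -/

section Exterior

variable (K : Type*) [Field K]

/-- The standard basis of `K⁴`. -/
abbrev e (i : Fin 4) : Fin 4 → K := Pi.single i 1

/-- The decomposable bivector `u ∧ v`, as an element of the second exterior power. -/
noncomputable def wedge (u v : Fin 4 → K) : ⋀[K]^2 (Fin 4 → K) :=
  exteriorPower.ιMulti K 2 ![u, v]

variable {K} in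
lemma coe_wedge (u v : Fin 4 → K) :
    (wedge K u v : ExteriorAlgebra K (Fin 4 → K)) = ι K u * ι K v := by
  simp [wedge, ExteriorAlgebra.ιMulti_apply]

/-- The bivectors `e₀ ∧ e₁`, `e₀ ∧ e₂`, `e₀ ∧ e₃`. -/
noncomputable def P (i : Fin 3) : ⋀[K]^2 (Fin 4 → K) := wedge K (e K 0) (e K (![1, 2, 3] i))

/-- The bivectors `e₂ ∧ e₃`, `e₁ ∧ e₃`, `e₁ ∧ e₂`; `Q i` is complementary to `P i`. -/
noncomputable def Q (i : Fin 3) : ⋀[K]^2 (Fin 4 → K) :=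
  wedge K (e K (![2, 1, 1] i)) (e K (![3, 3, 2] i))

/-- The volume element `e₀ ∧ e₁ ∧ e₂ ∧ e₃`, in the exterior algebra. -/
noncomputable def top : ExteriorAlgebra K (Fin 4 → K) :=
  ι K (e K 0) * ι K (e K 1) * ι K (e K 2) * ι K (e K 3)

/-- The determinant is an alternating form taking the value `1` on the standard basis. -/
lemma top_ne_zero : top K ≠ 0 := by
  intro h
  have h1 : (exteriorPower.ιMulti K 4 (e K) : ⋀[K]^4 (Fin 4 → K)) = 0 := by
    apply Subtype.ext
    rw [exteriorPower.ιMulti_apply_coe, ExteriorAlgebra.ιMulti_apply]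
    simpa [top, mul_assoc, List.ofFn_succ] using h
  have h2 := exteriorPower.alternatingMapLinearEquiv_apply_ιMulti
    (Matrix.detRowAlternating (R := K) (n := Fin 4)) (e K)
  rw [h1, map_zero] at h2
  have h3 : (Matrix.of (e K)) = 1 := by
    ext i j; simp [e, Matrix.one_apply, Pi.single_apply, eq_comm]
  have h4 : Matrix.detRowAlternating (R := K) (n := Fin 4) (e K) = 1 := by
    change Matrix.det (Matrix.of (e K)) = 1
    rw [h3, Matrix.det_one]
  rw [h4] at h2
  exact zero_ne_one h2

lemma span_P_Q : ⊤ ≤ Submodule.span K (Set.range (P K) ∪ Set.range (Q K)) := by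
  have hspan : Submodule.span K (Set.range (e K)) = ⊤ := by
    have := (Pi.basisFun K (Fin 4)).span_eq
    convert this using 3
    ext i; simp
  have hlt : ∀ i j : Fin 4, i < j →
      wedge K (e K i) (e K j) ∈ Submodule.span K (Set.range (P K) ∪ Set.range (Q K)) := by
    intro i j hij
    apply Submodule.subset_span
    have hcover : (∃ k : Fin 3, i = 0 ∧ j = ![1, 2, 3] k) ∨
        ∃ k : Fin 3, i = ![2, 1, 1] k ∧ j = ![3, 3, 2] k := by
      revert i j; decide
    rcases hcover with ⟨k, rfl, rfl⟩ | ⟨k, rfl, rfl⟩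
    · exact Or.inl ⟨k, rfl⟩
    · exact Or.inr ⟨k, rfl⟩
  rw [← exteriorPower.ιMulti_span_of_span K 2 (Fin 4 → K) hspan, Submodule.span_le]
  rintro _ ⟨a, ha, rfl⟩
  obtain ⟨i, hi⟩ := ha ⟨0, rfl⟩
  obtain ⟨j, hj⟩ := ha ⟨1, rfl⟩
  have hwedge : exteriorPower.ιMulti K 2 a = wedge K (e K i) (e K j) := by
    rw [wedge, hi, hj]
    congr 1
    ext l : 1
    fin_cases l <;> rfl
  rw [hwedge, SetLike.mem_coe]
  rcases lt_trichotomy i j with h | rfl | h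
  · exact hlt i j h
  · have : wedge K (e K i) (e K i) = 0 :=
      Subtype.ext (by rw [coe_wedge, ι_sq_zero]; rfl)
    rw [this]
    exact Submodule.zero_mem _
  · have : wedge K (e K i) (e K j) = -wedge K (e K j) (e K i) :=
      Subtype.ext (by
        rw [Submodule.coe_neg, coe_wedge, coe_wedge]
        exact eq_neg_of_add_eq_zero_left (ι_add_mul_swap _ _))
    rw [this]
    exact Submodule.neg_mem _ (hlt j i h)

variable {K}

lemma ι_mul_self_mul (u : Fin 4 → K) (x : ExteriorAlgebra K (Fin 4 → K)) :
    ι K u * (ι K u * x) = 0 := by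
  rw [← mul_assoc, ι_sq_zero, zero_mul]

variable [CharP K 2]

/-- Anticommutation without the sign, in characteristic two. -/
lemma ι_comm (u v : Fin 4 → K) : ι K u * ι K v = ι K v * ι K u := by
  have h := ExteriorAlgebra.ι_add_mul_swap (R := K) u v
  have h2 : ∀ x : ExteriorAlgebra K (Fin 4 → K), x + x = 0 := fun x => by
    rw [← two_smul K x, CharTwo.two_eq_zero, zero_smul]
  exact add_right_cancel (h.trans (h2 _).symm)

lemma ι_left_comm (u v : Fin 4 → K) (x : ExteriorAlgebra K (Fin 4 → K)) :
    ι K u * (ι K v * x) = ι K v * (ι K u * x) := by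
  rw [← mul_assoc, ι_comm, mul_assoc]

lemma wedge_mul_comm (u v u' v' : Fin 4 → K) :
    (wedge K u v : ExteriorAlgebra K (Fin 4 → K)) * wedge K u' v' =
      wedge K u' v' * wedge K u v := by
  simp only [coe_wedge, mul_assoc, ι_comm, ι_left_comm]

lemma P_mul_P (i j : Fin 3) : (P K i : ExteriorAlgebra K (Fin 4 → K)) * P K j = 0 := by
  simp only [P, coe_wedge, mul_assoc]
  rw [ι_left_comm (e K (![1, 2, 3] i)), ι_mul_self_mul]

lemma Q_mul_Q (i j : Fin 3) : (Q K i : ExteriorAlgebra K (Fin 4 → K)) * Q K j = 0 := by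
  fin_cases i <;> fin_cases j <;>
    simp [Q, coe_wedge, mul_assoc, ι_comm, ι_left_comm, ι_mul_self_mul]

lemma P_mul_Q (i j : Fin 3) : (P K i : ExteriorAlgebra K (Fin 4 → K)) * Q K j =
    if i = j then top K else 0 := by
  fin_cases i <;> fin_cases j <;>
    simp [P, Q, top, coe_wedge, mul_assoc, ι_comm, ι_left_comm, ι_mul_self_mul]

lemma Q_mul_P (i j : Fin 3) : (Q K i : ExteriorAlgebra K (Fin 4 → K)) * P K j =
    if i = j then top K else 0 := by
  rw [Q, P, wedge_mul_comm, ← Q, ← P, P_mul_Q]; simp [eq_comm]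

variable (K) in
/-- The coordinate map `(a, b) ↦ ∑ aᵢ P i + ∑ bᵢ Q i`. -/
noncomputable def T : ((Fin 3 → K) × (Fin 3 → K)) →ₗ[K] ⋀[K]^2 (Fin 4 → K) :=
  (Fintype.linearCombination K (P K)).coprod (Fintype.linearCombination K (Q K))

omit [CharP K 2] in
lemma T_apply (a b : Fin 3 → K) : T K (a, b) = ∑ i, a i • P K i + ∑ i, b i • Q K i := by
  simp [T, Fintype.linearCombination_apply]

omit [CharP K 2] in
lemma T_surjective : Function.Surjective (T K) := by
  rw [← LinearMap.range_eq_top, eq_top_iff, T, LinearMap.range_coprod]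
  rw [Fintype.range_linearCombination, Fintype.range_linearCombination, ← Submodule.span_union]
  exact span_P_Q K

lemma T_mul_P (a b : Fin 3 → K) (j : Fin 3) :
    (T K (a, b) : ExteriorAlgebra K (Fin 4 → K)) * P K j = b j • top K := by
  simp [T_apply, add_mul, Finset.sum_mul, P_mul_P, Q_mul_P]

lemma T_mul_Q (a b : Fin 3 → K) (j : Fin 3) :
    (T K (a, b) : ExteriorAlgebra K (Fin 4 → K)) * Q K j = a j • top K := by
  simp [T_apply, add_mul, Finset.sum_mul, Q_mul_Q, P_mul_Q]

/-- The coordinates of `T (a, b)` are recovered from its products with the `P j` and `Q j`. -/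
lemma T_injective : Function.Injective (T K) := by
  rintro ⟨a, b⟩ ⟨a', b'⟩ h
  ext j
  · exact smul_left_injective K (top_ne_zero K)
      (by
        simpa only [T_mul_Q] using congrArg
          (fun x : ⋀[K]^2 (Fin 4 → K) => (x : ExteriorAlgebra K (Fin 4 → K)) * Q K j) h)
  · exact smul_left_injective K (top_ne_zero K)
      (by
        simpa only [T_mul_P] using congrArg
          (fun x : ⋀[K]^2 (Fin 4 → K) => (x : ExteriorAlgebra K (Fin 4 → K)) * P K j) h)

end Exterior
end HermitianWedge

/-! ### The fixed space of the involution -/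

open HermitianWedge

/-- over `F₄` (so `p = 2`), the fixed space `W` of the involution `bar` on
`Λ²(F₄⁴)` is a 6-dimensional `F₂`-vector space (i.e. has 64 elements), the quadratic form
`ψ` defined by `γ₂(u) = ψ(u) • w` takes values in `F₂ = {0,1}` on `W`, and `(W, ψ)` is
non-split: it contains no totally singular `F₂`-subspace of dimension 3 (cardinality 8). -/
theorem stmt_11 (K : Type*) [Field K] [Fintype K] (hcard : Fintype.card K = 4)
    (σ : K →+* K) (hσ : ∀ x : K, σ x = x ^ 2)
    (h : (Fin 4 → K) → (Fin 4 → K) → K)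
    (hh : ∀ u v : Fin 4 → K, h u v = ∑ i, σ (u i) * v i)
    (w : ExteriorAlgebra K (Fin 4 → K))
    (hw : w = ι K (Pi.single 0 1) * ι K (Pi.single 1 1) * ι K (Pi.single 2 1)
        * ι K (Pi.single 3 1))
    (B : ⋀[K]^2 (Fin 4 → K) → ⋀[K]^2 (Fin 4 → K) → K)
    (hBadd₁ : ∀ x y z, B (x + y) z = B x z + B y z)
    (hBadd₂ : ∀ x y z, B x (y + z) = B x y + B x z)
    (hBsemi : ∀ (a : K) (x y), B (a • x) y = σ a * B x y)
    (hBlin : ∀ (a : K) (x y), B x (a • y) = a * B x y)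
    (hBgen : ∀ (u₁ u₂ v₁ v₂ : Fin 4 → K) (x y : ⋀[K]^2 (Fin 4 → K)),
      (x : ExteriorAlgebra K (Fin 4 → K)) = ι K u₁ * ι K u₂ →
      (y : ExteriorAlgebra K (Fin 4 → K)) = ι K v₁ * ι K v₂ →
      B x y = h u₁ v₁ * h u₂ v₂ - h u₁ v₂ * h u₂ v₁)
    (bar : ⋀[K]^2 (Fin 4 → K) → ⋀[K]^2 (Fin 4 → K))
    (hbar : ∀ x y : ⋀[K]^2 (Fin 4 → K),
      (x : ExteriorAlgebra K (Fin 4 → K)) * (y : ExteriorAlgebra K (Fin 4 → K))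
        = B (bar x) y • w)
    (γ : ⋀[K]^2 (Fin 4 → K) → ExteriorAlgebra K (Fin 4 → K))
    (hγsmul : ∀ (a : K) (x), γ (a • x) = (a * a) • γ x)
    (hγadd : ∀ x y, γ (x + y) = γ x
      + (x : ExteriorAlgebra K (Fin 4 → K)) * (y : ExteriorAlgebra K (Fin 4 → K)) + γ y)
    (hγwedge : ∀ (u v : Fin 4 → K) (x : ⋀[K]^2 (Fin 4 → K)),
      (x : ExteriorAlgebra K (Fin 4 → K)) = ι K u * ι K v → γ x = 0)
    (ψ : ⋀[K]^2 (Fin 4 → K) → K) (hψ : ∀ x, γ x = ψ x • w)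
    (W : AddSubgroup (⋀[K]^2 (Fin 4 → K))) (hW : ∀ x, x ∈ W ↔ bar x = x) :
    Nat.card W = 64
    ∧ (∀ x ∈ W, ψ x = 0 ∨ ψ x = 1)
    ∧ ¬ ∃ S : AddSubgroup (⋀[K]^2 (Fin 4 → K)),
        (S : Set (⋀[K]^2 (Fin 4 → K))) ⊆ (W : Set (⋀[K]^2 (Fin 4 → K)))
        ∧ Nat.card S = 8 ∧ ∀ x ∈ S, ψ x = 0 := by
  subst hw
  change (∀ x y : ⋀[K]^2 (Fin 4 → K), (x : ExteriorAlgebra K (Fin 4 → K)) * y =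
    B (bar x) y • HermitianWedge.top K) at hbar
  change ∀ x, γ x = ψ x • HermitianWedge.top K at hψ
  have hchar := charP_two hcard
  have hσσ : ∀ x, σ (σ x) = x := fun x => by
    have hx := FiniteField.pow_card x
    rw [hcard] at hx
    rw [hσ, hσ, ← pow_mul]
    exact hx
  have he : ∀ i j, h (e K i) (e K j) = if i = j then 1 else 0 := fun i j => by
    simp [hh, e, Pi.single_apply, apply_ite σ, eq_comm]
  have hBw : ∀ i j k l, B (wedge K (e K i) (e K j)) (wedge K (e K k) (e K l)) =
      (if i = k then 1 else 0) * (if j = l then 1 else 0) -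
        (if i = l then 1 else 0) * (if j = k then 1 else 0) := fun i j k l => by
    rw [hBgen _ _ _ _ _ _ (coe_wedge _ _) (coe_wedge _ _)]
    simp only [he]
  have hBPP : ∀ i j, B (P K i) (P K j) = if i = j then 1 else 0 := by
    intro i j; rw [P, P, hBw]; revert i j; simp [Fin.forall_fin_succ]
  have hBPQ : ∀ i j, B (P K i) (Q K j) = 0 := by
    intro i j; rw [P, Q, hBw]; revert i j; simp [Fin.forall_fin_succ]
  have hBQP : ∀ i j, B (Q K i) (P K j) = 0 := by
    intro i j; rw [P, Q, hBw]; revert i j; simp [Fin.forall_fin_succ]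
  have hBQQ : ∀ i j, B (Q K i) (Q K j) = if i = j then 1 else 0 := by
    intro i j; rw [Q, Q, hBw]; revert i j; simp [Fin.forall_fin_succ]
  have hBTP : ∀ a b j, B (T K (a, b)) (P K j) = σ (a j) := by
    intro a b j
    fin_cases j <;> simp [T_apply, Fin.sum_univ_three, hBadd₁, hBsemi, hBPP, hBQP]
  have hBTQ : ∀ a b j, B (T K (a, b)) (Q K j) = σ (b j) := by
    intro a b j
    fin_cases j <;> simp [T_apply, Fin.sum_univ_three, hBadd₁, hBsemi, hBPQ, hBQQ]
  have hbarT : ∀ a b, bar (T K (a, b)) = T K (fun i => σ (b i), fun i => σ (a i)) := by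
    intro a b
    obtain ⟨⟨c, d⟩, hcd⟩ := T_surjective (bar (T K (a, b)))
    rw [← hcd]
    -- `B (bar x)` on the orthonormal basis reads off the products of `x` with that basis.
    congr 2 <;> ext j
    · have := hbar (T K (a, b)) (P K j)
      rw [← hcd, T_mul_P, hBTP] at this
      rw [smul_left_injective K (top_ne_zero K) this, hσσ]
    · have := hbar (T K (a, b)) (Q K j)
      rw [← hcd, T_mul_Q, hBTQ] at this
      rw [smul_left_injective K (top_ne_zero K) this, hσσ]
  have hWT : ∀ a b, T K (a, b) ∈ W ↔ b = fun i => σ (a i) := by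
    intro a b
    rw [hW, hbarT, T_injective.eq_iff, Prod.mk.injEq]
    constructor
    · exact fun h => h.2.symm
    · rintro rfl
      simp [hσσ]
  have hγP : ∀ a : Fin 3 → K, γ (T K (a, 0)) = 0 := by
    have hP : ∀ i, γ (P K i) = 0 := fun i => hγwedge _ _ _ (coe_wedge _ _)
    intro a
    simp [T_apply, Fin.sum_univ_three, hγadd, hγsmul, hP, add_mul, P_mul_P]
  have hγQ : ∀ b : Fin 3 → K, γ (T K (0, b)) = 0 := by
    have hQ : ∀ i, γ (Q K i) = 0 := fun i => hγwedge _ _ _ (coe_wedge _ _)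
    intro b
    simp [T_apply, Fin.sum_univ_three, hγadd, hγsmul, hQ, add_mul, Q_mul_Q]
  have hψT : ∀ a b, ψ (T K (a, b)) = ∑ i, a i * b i := by
    intro a b
    have hsplit : T K (a, b) = T K (a, 0) + T K (0, b) := by rw [← map_add]; simp
    apply smul_left_injective K (top_ne_zero K)
    change ψ _ • top K = _ • top K
    rw [← hψ, hsplit, hγadd, hγP, hγQ, zero_add, add_zero, T_apply 0 b]
    simp [Finset.mul_sum, T_mul_Q, Finset.sum_smul, smul_smul, mul_comm]
  have hψW : ∀ a b, T K (a, b) ∈ W → ψ (T K (a, b)) = ∑ i, a i ^ 3 := by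
    intro a b hab
    rw [hψT, (hWT a b).1 hab]
    exact Finset.sum_congr rfl fun i _ => by simp only [hσ]; ring
  let T' : ((Fin 3 → K) × (Fin 3 → K)) ≃ₗ[K] ⋀[K]^2 (Fin 4 → K) :=
    LinearEquiv.ofBijective (T K) ⟨T_injective, T_surjective⟩
  have hT' : ∀ x, T K ((T'.symm x).1, (T'.symm x).2) = x := T'.apply_symm_apply
  refine ⟨?_, ?_, ?_⟩
  · let g : (Fin 3 → K) → W := fun a => ⟨T K (a, fun i => σ (a i)), (hWT _ _).2 rfl⟩
    have hg : Function.Bijective g := by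
      constructor
      · intro a a' haa
        exact congrArg Prod.fst (T_injective (congrArg Subtype.val haa))
      · rintro ⟨x, hx⟩
        obtain ⟨⟨a, b⟩, rfl⟩ := T_surjective x
        obtain rfl := (hWT a b).1 hx
        exact ⟨a, rfl⟩
    rw [← Nat.card_eq_of_bijective g hg, Nat.card_eq_fintype_card]
    simp [hcard]
  · intro x hx
    obtain ⟨⟨a, b⟩, rfl⟩ := T_surjective x
    rw [hψW a b hx]
    have hc : ∀ i, a i ^ 3 = 0 ∨ a i ^ 3 = 1 := fun i => by
      by_cases h0 : a i = 0
      · simp [h0]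
      · exact Or.inr (cube_eq_one hcard h0)
    rw [Fin.sum_univ_three]
    rcases hc 0 with h0 | h0 <;> rcases hc 1 with h1 | h1 <;> rcases hc 2 with h2 | h2 <;>
      simp [h0, h1, h2, CharTwo.add_self_eq_zero]
  · rintro ⟨S, hSW, hS, hS0⟩
    let f : Fin 3 → ⋀[K]^2 (Fin 4 → K) →+ K := fun i =>
      ((LinearMap.proj i ∘ₗ LinearMap.fst K _ _) ∘ₗ T'.symm.toLinearMap).toAddMonoidHom
    have hf : ∀ i x, f i x = (T'.symm x).1 i := fun _ _ => rfl
    refine no_singular_card_eight hcard S hS f ?_ ?_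
    · intro s hs h0
      have hsW := hSW hs
      rw [SetLike.mem_coe, ← hT' s, hWT] at hsW
      have h1 : (T'.symm s).1 = 0 := funext fun i => by rw [← hf, h0]; rfl
      rw [← hT' s, hsW, h1]
      have h2 : ((0 : Fin 3 → K), fun i => σ ((0 : Fin 3 → K) i)) = 0 :=
        Prod.ext rfl (funext fun _ => map_zero σ)
      rw [h2, map_zero]
    · intro s hs
      have hsW := hSW hs
      rw [SetLike.mem_coe, ← hT' s] at hsW
      rw [← hS0 s hs]
      conv_rhs => rw [← hT' s]
      rw [hψW _ _ hsW]
      rfl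
end

section
/- For every vector bundle E on P¹ over a field and every non-constant morphism f: P¹ → P¹, the pullback map f*: H¹(P¹, E) → H¹(P¹, f*E) is injective. -/
/-!
Two facts carry the argument.

* Since `φ` is non-constant it is transcendental over `k` (`RatFunc.transcendental_of_ne_C`), so
  the powers `φ ^ i`, `i ∈ ℤ`, form a basis of the cocycles `Zt`. The coboundaries are spanned by
  those with `0 ≤ i` or `i ≤ n`, so the exponents `n < i < 0` index a basis of the quotient
  (`finrank_quotient_span_image`).
* A function integral over both `k[φ]` and `k[φ⁻¹]` is constant
  (`exists_C_of_integral_both`): every valuation ring of `k(t)` containing `k` contains `φ` or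
  `φ⁻¹`, hence the function, and the intersection of these valuation rings is the integral
  closure of `k` in `k(t)`, which is `k`. Geometrically, this is `H⁰(P¹, O) = k`.

For injectivity, write a cocycle modulo coboundaries as `w` in the span of the `φ ^ i` with
`n < i < 0`. If `w = a + φⁿ b` with `a ∈ R0`, `b ∈ R1`, then `a = w - φⁿ b` also lies in `R1`, so
`a` is constant; then `b = φ⁻ⁿ (w - a)` also lies in `R0`, so `b` is constant. Hence `w` is a
coboundary on the target. No trace is used, so inseparable `φ` and degrees divisible by the
characteristic need no special treatment.
-/

theorem mem_valuationSubring_of_isIntegral_adjoin {k K : Type*} [Field k] [Field K] [Algebra k K]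
    (V : ValuationSubring K) (hk : ∀ c : k, algebraMap k K c ∈ V) {y x : K} (hy : y ∈ V)
    (hx : IsIntegral (Algebra.adjoin k {y}) x) : x ∈ V := by
  have hle : ∀ r : Algebra.adjoin k {y}, (r : K) ∈ V := by
    rintro ⟨r, hr⟩
    induction hr using Algebra.adjoin_induction with
    | mem r h => rw [Set.mem_singleton_iff] at h; subst h; exact hy
    | algebraMap c => exact hk c
    | add a b _ _ ha hb => exact add_mem ha hb
    | mul a b _ _ ha hb => exact mul_mem ha hb
  have h2 : IsIntegral V x := by
    have := IsIntegral.map_of_comp_eq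
      ((algebraMap (Algebra.adjoin k {y}) K).codRestrict V hle) (RingHom.id K)
      (by ext r; rfl) hx
    simpa using this
  obtain ⟨z, rfl⟩ := IsIntegrallyClosedIn.isIntegral_iff.mp h2
  exact z.2

/-- Functions on the source `P¹` regular over both charts of the target are constant: each
valuation ring of `k(t)` over `k` contains `φ` or `φ⁻¹`. -/
theorem exists_C_of_integral_both {k : Type*} [Field k] (φ x : RatFunc k)
    (h0 : IsIntegral (Algebra.adjoin k {φ}) x) (h1 : IsIntegral (Algebra.adjoin k {φ⁻¹}) x) :
    ∃ c : k, x = RatFunc.C c := by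
  by_contra hx
  refine RatFunc.transcendental_of_ne_C x hx (IsIntegral.isAlgebraic ?_)
  have hmem : x ∈ (⨅ V : {V : ValuationSubring (RatFunc k) //
      Set.range (algebraMap k (RatFunc k)) ⊆ V.toSubring}, V.1.toSubring) := by
    rw [Subring.mem_iInf]
    rintro ⟨V, hV⟩
    have hk : ∀ c : k, algebraMap k (RatFunc k) c ∈ V := fun c => hV ⟨c, rfl⟩
    rcases V.mem_or_inv_mem φ with h | h
    · exact mem_valuationSubring_of_isIntegral_adjoin V hk h h0
    · exact mem_valuationSubring_of_isIntegral_adjoin V hk h h1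
  rw [iInf_valuationSubring_superset] at hmem
  -- The closure of the range of `k` is isomorphic to `k`, so integrality descends to `k`.
  have hi : IsIntegral (Subring.closure (Set.range (algebraMap k (RatFunc k)))) x := hmem
  have hle : Subring.closure (Set.range (algebraMap k (RatFunc k))) ≤
      (algebraMap k (RatFunc k)).range :=
    Subring.closure_le.2 (by rintro _ ⟨c, rfl⟩; exact ⟨c, rfl⟩)
  have := IsIntegral.map_of_comp_eq
    (((RingEquiv.ofLeftInverse (Function.leftInverse_invFun
      (algebraMap k (RatFunc k)).injective)).symm.toRingHom).comp (Subring.inclusion hle))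
    (RingHom.id (RatFunc k))
    (by
      ext r
      obtain ⟨c, hc⟩ := hle r.2
      have : Subring.inclusion hle r = (RingEquiv.ofLeftInverse (Function.leftInverse_invFun
        (algebraMap k (RatFunc k)).injective)) c := Subtype.ext hc.symm
      rw [RingHom.comp_apply, RingHom.comp_apply, this]
      exact (congrArg (algebraMap k (RatFunc k)) (RingEquiv.symm_apply_apply _ c)).trans hc) hi
  simpa using this

theorem linearIndependent_zpow_of_transcendental {k K : Type*} [Field k] [Field K] [Algebra k K]
    {x : K} (hx : Transcendental k x) : LinearIndependent k (fun i : ℤ => x ^ i) := by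
  have hx0 : x ≠ 0 := by rintro rfl; exact hx isAlgebraic_zero
  have hpow : LinearIndependent k (fun i : ℕ => x ^ i) := by
    have := (Polynomial.basisMonomials k).linearIndependent.map'
      (Polynomial.aeval x).toLinearMap
      (LinearMap.ker_eq_bot.2 (transcendental_iff_injective.1 hx))
    have he : (fun i : ℕ => x ^ i) =
        (Polynomial.aeval x).toLinearMap ∘ Polynomial.basisMonomials k := by
      ext i
      simp [Polynomial.aeval_monomial]
    rw [he]
    exact this
  rw [linearIndependent_iff']
  intro s g hg i hi
  -- Multiplying by a large power of `x` moves all exponents of a relation into `ℕ`.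
  obtain ⟨N, hN⟩ : ∃ N : ℕ, ∀ j ∈ s, 0 ≤ j + N := by
    refine ⟨∑ j ∈ s, j.natAbs, fun j hj => ?_⟩
    have := Finset.single_le_sum (f := fun j : ℤ => j.natAbs) (fun _ _ => Nat.zero_le _) hj
    lia
  have hinj : Set.InjOn (fun j : ℤ => (j + N).toNat) (s : Set ℤ) := by
    intro a ha b hb hab
    have := hN a ha
    have := hN b hb
    simp only at hab
    lia
  have hli : LinearIndepOn k (fun j : ℤ => x ^ (j + N).toNat) (s : Set ℤ) :=
    hpow.comp _ (Set.injOn_iff_injective.1 hinj)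
  refine linearIndepOn_finset_iff.1 hli g ?_ i hi
  have : ∑ j ∈ s, g j • x ^ (j + N).toNat = x ^ N * ∑ j ∈ s, g j • x ^ j := by
    rw [Finset.mul_sum]
    refine Finset.sum_congr rfl fun j hj => ?_
    rw [mul_smul_comm]
    congr 1
    rw [← zpow_natCast, ← zpow_natCast, ← zpow_add₀ hx0, Int.toNat_of_nonneg (hN j hj), add_comm]
  rw [this, hg, mul_zero]

/-- The quotient of the span of a free family by the span of a subfamily has as dimension the
number of remaining indices. -/
theorem finrank_quotient_span_image {k V ι : Type*} [Field k] [AddCommGroup V] [Module k V]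
    {v : ι → V} (hv : LinearIndependent k v) (t : Finset ι) :
    Module.finrank k (↥(Submodule.span k (Set.range v)) ⧸
      Submodule.comap (Submodule.span k (Set.range v)).subtype
        (Submodule.span k (v '' (t : Set ι)ᶜ))) = t.card := by
  classical
  let b := Module.Basis.span hv
  let L : ↥(Submodule.span k (Set.range v)) →ₗ[k] (t → k) :=
    LinearMap.pi fun i => b.coord i
  have hsurj : Function.Surjective L := by
    intro f
    refine ⟨∑ i : t, f i • b i, ?_⟩
    ext j
    simp only [L, LinearMap.pi_apply, map_sum, map_smul, Module.Basis.coord_apply,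
      Module.Basis.repr_self, Finsupp.single_apply, Subtype.val_inj, smul_eq_mul, mul_ite,
      mul_one, mul_zero]
    rw [Finset.sum_ite_eq' Finset.univ j f, if_pos (Finset.mem_univ j)]
  have hker : LinearMap.ker L = Submodule.comap (Submodule.span k (Set.range v)).subtype
        (Submodule.span k (v '' (t : Set ι)ᶜ)) := by
    have himg : Submodule.span k (v '' (t : Set ι)ᶜ) =
        Submodule.map (Submodule.span k (Set.range v)).subtype
          (Submodule.span k (b '' (t : Set ι)ᶜ)) := by
      rw [Submodule.map_span, ← Set.image_comp]
      congr 2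
      ext i
      simp [b, Module.Basis.span_apply]
    rw [himg, Submodule.comap_map_eq_of_injective (Submodule.injective_subtype _)]
    ext m
    rw [b.mem_span_image, LinearMap.mem_ker]
    constructor
    · intro h i hi hit
      have := congrFun h ⟨i, hit⟩
      simp [L] at this
      simp [this] at hi
    · intro h
      ext ⟨i, hi⟩
      by_contra hne
      exact h (Finsupp.mem_support_iff.2 hne) hi
  rw [← hker, (L.quotKerEquivOfSurjective hsurj).finrank_eq]
  simp


/-- Čech model for `H¹(P¹, O(n))` and pullback along a non-constant morphism
`f : P¹ → P¹` given by a non-constant rational function `φ ∈ k(t)`.  The target `P¹` has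
coordinate `φ`; its Čech complex for `O(n)` (standard two-chart cover) has cocycles the
Laurent polynomials in `φ` (the span `Zt` of `φ^i`, `i ∈ ℤ`) and coboundaries
`A ⊔ Bn = k[φ] + φⁿ·k[φ⁻¹]`.  On the source, the preimages of the two charts are the
affine opens with coordinate rings the integral closures `R0`, `R1`, `R01` of `k[φ]`,
`k[φ⁻¹]`, `k[φ, φ⁻¹]` in `k(t)`, and the pullback bundle `f*O(n)` has Čech coboundaries
`R0 ⊔ φⁿ·R1`; the map `f*` on `H¹` is induced by the inclusion `Zt ⊆ R01`.  The claims: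
`dim H¹(P¹, O(n)) = max(0, −n−1)`, and `f*` is injective on `H¹`, i.e. a cocycle
`z ∈ Zt` that is a coboundary upstairs is already a coboundary downstairs. -/
theorem stmt_13 (k : Type*) [Field k] (φ : RatFunc k) (hφ : ¬∃ c : k, φ = RatFunc.C c)
    (n : ℤ)
    (Zt A Bn R0 R1 R01 : Submodule k (RatFunc k))
    (hZt : Zt = Submodule.span k (Set.range fun i : ℤ => φ ^ i))
    (hA : A = Submodule.span k (Set.range fun i : ℕ => φ ^ i))
    (hBn : Bn = Submodule.span k (Set.range fun i : ℕ => φ ^ (n - i)))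
    (hR0 : R0 = Subalgebra.toSubmodule
      ((integralClosure (Algebra.adjoin k {φ}) (RatFunc k)).restrictScalars k))
    (hR1 : R1 = Subalgebra.toSubmodule
      ((integralClosure (Algebra.adjoin k {φ⁻¹}) (RatFunc k)).restrictScalars k))
    (hR01 : R01 = Subalgebra.toSubmodule
      ((integralClosure (Algebra.adjoin k {φ, φ⁻¹}) (RatFunc k)).restrictScalars k)) :
    Module.finrank k (↥Zt ⧸ Submodule.comap Zt.subtype (A ⊔ Bn)) = (-n - 1).toNat
    ∧ ∀ z ∈ Zt, z ∈ R0 ⊔ Submodule.map (LinearMap.mulLeft k (φ ^ n)) R1 → z ∈ A ⊔ Bn := by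
  have htr := RatFunc.transcendental_of_ne_C φ hφ
  have hφ0 : φ ≠ 0 := fun h => hφ ⟨0, by simp [h]⟩
  have hli := linearIndependent_zpow_of_transcendental htr
  have hAB : A ⊔ Bn = Submodule.span k
      ((fun i : ℤ => φ ^ i) '' ((Finset.Ioo n 0 : Finset ℤ) : Set ℤ)ᶜ) := by
    rw [hA, hBn, ← Submodule.span_union]
    congr 1
    ext y
    simp only [Set.mem_union, Set.mem_range, Set.mem_image, Set.mem_compl_iff, Finset.coe_Ioo,
      Set.mem_Ioo]
    constructor
    · rintro (⟨i, rfl⟩ | ⟨i, rfl⟩)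
      · exact ⟨i, by lia, by simp⟩
      · exact ⟨n - i, by lia, rfl⟩
    · rintro ⟨i, hi, rfl⟩
      by_cases h : 0 ≤ i
      · exact Or.inl ⟨i.toNat, by rw [← zpow_natCast, Int.toNat_of_nonneg h]⟩
      · exact Or.inr ⟨(n - i).toNat, by rw [Int.toNat_of_nonneg (by lia)]; congr 1; ring⟩
  refine ⟨?_, ?_⟩
  · subst hZt
    rw [hAB, finrank_quotient_span_image hli, Int.card_Ioo]
    congr 1
    ring
  intro z hz hzR
  have memR0 : ∀ y, y ∈ R0 ↔ IsIntegral (Algebra.adjoin k {φ}) y := fun y => by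
    rw [hR0]; rfl
  have memR1 : ∀ y, y ∈ R1 ↔ IsIntegral (Algebra.adjoin k {φ⁻¹}) y := fun y => by
    rw [hR1]; rfl
  have hpow0 : ∀ i : ℤ, 0 ≤ i → φ ^ i ∈ R0 := fun i hi => by
    lift i to ℕ using hi
    rw [memR0, zpow_natCast]
    exact IsIntegral.pow (isIntegral_algebraMap
      (x := (⟨φ, Algebra.self_mem_adjoin_singleton k φ⟩ : Algebra.adjoin k {φ}))) i
  have hpow1 : ∀ i : ℤ, i ≤ 0 → φ ^ i ∈ R1 := fun i hi => by
    obtain ⟨j, rfl⟩ : ∃ j : ℕ, i = -j := ⟨(-i).toNat, by lia⟩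
    rw [memR1, zpow_neg, zpow_natCast, ← inv_pow]
    exact IsIntegral.pow (isIntegral_algebraMap
      (x := (⟨φ⁻¹, Algebra.self_mem_adjoin_singleton k φ⁻¹⟩ : Algebra.adjoin k {φ⁻¹}))) j
  have hmul0 : ∀ x ∈ R0, ∀ y ∈ R0, x * y ∈ R0 := fun x hx y hy => by
    rw [memR0] at *; exact hx.mul hy
  have hmul1 : ∀ x ∈ R1, ∀ y ∈ R1, x * y ∈ R1 := fun x hx y hy => by
    rw [memR1] at *; exact hx.mul hy
  have hAR : A ≤ R0 := by
    rw [hA, Submodule.span_le]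
    rintro _ ⟨i, rfl⟩
    simpa using hpow0 i (by lia)
  have hBR : ∀ y ∈ Bn, y * φ ^ (-n) ∈ R1 := by
    intro y hy
    have : Bn ≤ R1.comap (LinearMap.mulRight k (φ ^ (-n))) := by
      rw [hBn, Submodule.span_le]
      rintro _ ⟨i, rfl⟩
      change φ ^ (n - (i : ℤ)) * φ ^ (-n) ∈ R1
      rw [← zpow_add₀ hφ0]
      exact hpow1 _ (by lia)
    exact this hy
  have hconst : ∀ x ∈ R0, x ∈ R1 → ∃ c : k, x = c • 1 := fun x h0 h1 => by
    obtain ⟨c, rfl⟩ := exists_C_of_integral_both φ x ((memR0 x).1 h0) ((memR1 x).1 h1)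
    exact ⟨c, by rw [RatFunc.smul_eq_C_mul, mul_one]⟩
  have hA1 : (1 : RatFunc k) ∈ A := by
    rw [hA]; exact Submodule.subset_span ⟨0, by simp⟩
  have hBn1 : φ ^ n ∈ Bn := by
    rw [hBn]; exact Submodule.subset_span ⟨0, by simp⟩
  rcases le_or_gt 0 n with hn | hn
  -- For `0 ≤ n` every exponent is non-negative or at most `n`: all cocycles are coboundaries.
  · rw [hAB, Finset.Ioo_eq_empty (by lia)]
    rw [hZt] at hz
    simpa using hz
  obtain ⟨y, hy, w, hw, rfl⟩ : ∃ y ∈ A ⊔ Bn, ∃ w ∈ Submodule.span k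
      ((fun i : ℤ => φ ^ i) '' (Set.Ioo n 0)), y + w = z := by
    rw [← Submodule.mem_sup, hAB, ← Submodule.span_union, ← Set.image_union]
    rw [hZt, ← Set.image_univ] at hz
    simpa using hz
  obtain ⟨α, hα, β, hβ, rfl⟩ := Submodule.mem_sup.1 hy
  obtain ⟨a, ha, b', hb', hab⟩ := Submodule.mem_sup.1 hzR
  obtain ⟨b, hb, rfl⟩ := hb'
  rw [LinearMap.mulLeft_apply] at hab
  have hw1 : w ∈ R1 := by
    refine Submodule.span_le.2 ?_ hw
    rintro _ ⟨i, hi, rfl⟩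
    exact hpow1 i hi.2.le
  have hw0 : w * φ ^ (-n) ∈ R0 := by
    have : Submodule.span k ((fun i : ℤ => φ ^ i) '' (Set.Ioo n 0)) ≤
        R0.comap (LinearMap.mulRight k (φ ^ (-n))) := by
      rw [Submodule.span_le]
      rintro _ ⟨i, hi, rfl⟩
      change φ ^ i * φ ^ (-n) ∈ R0
      rw [← zpow_add₀ hφ0]
      exact hpow0 _ (by have := hi.1; lia)
    exact this hw
  have hnn : φ ^ n * φ ^ (-n) = 1 := by rw [← zpow_add₀ hφ0]; simp
  -- `w = (a - α) + φⁿ (b - β φ⁻ⁿ)` with both brackets constant.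
  have hb1 : b - β * φ ^ (-n) ∈ R1 := sub_mem hb (hBR β hβ)
  have ha0 : a - α ∈ R0 := sub_mem ha (hAR hα)
  have haw : a - α = w - φ ^ n * (b - β * φ ^ (-n)) := by
    linear_combination hab - β * hnn
  obtain ⟨c, hc⟩ := hconst _ ha0 (by
    rw [haw]
    exact sub_mem hw1 (hmul1 _ (hpow1 n hn.le) _ hb1))
  have hbw : b - β * φ ^ (-n) = w * φ ^ (-n) - (a - α) * φ ^ (-n) := by
    linear_combination (-(b - β * φ ^ (-n))) * hnn + φ ^ (-n) * haw
  obtain ⟨d, hd⟩ := hconst _ (by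
    rw [hbw]
    exact sub_mem hw0 (hmul0 _ ha0 _ (hpow0 _ (by lia)))) hb1
  refine add_mem hy ?_
  have hwe : w = c • 1 + d • φ ^ n := by
    have h : w = (a - α) + φ ^ n * (b - β * φ ^ (-n)) := by rw [haw]; ring
    rw [h, hc, hd, mul_smul_comm, mul_one]
  rw [hwe]
  exact Submodule.add_mem_sup (A.smul_mem c hA1) (Bn.smul_mem d hBn1)
end

section
/- Let X be a smooth projective scheme over a field with a short exact sequence of O_X-modules 0 → E → F → M → 0 where E and F are locally free and M is locally free outside a closed subset Z with depth_x O_{X,x} ≥ k for all x ∈ Z. Then for every x ∈ Z and every m ≥ 0, depth_x(Λ^m M) ≥ k − m. In particular, if k ≥ m + 1, the wedge-filtration quotient maps Λ^{m−r}E ⊗ Λ^r M → G^r/G^{r−1} on Λ^m F are isomorphisms for r < m. -/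
/-!
Depth along `V(J)` is measured by the vanishing of `Ext^i(T, N)` for `i < k` and all finitely
generated `T` killed by a power of `J` (`DepthGE`). This is equivalent to the vanishing of local
cohomology: if it holds below degree `i`, then the transition maps of the system
`Ext^i(R ⧸ J ^ n, N)` are injective, so its colimit vanishes only if all its terms do, and a general
`T` is a quotient of a finite power of some `R ⧸ J ^ n`. Mathlib's local cohomology uses the `Ext`
defined by left derived functors, while the long exact sequences are available for `Abelian.Ext`; the
two are compared on the cochains of a projective resolution.

For the wedge filtration, `gradedMap` is the map `Λ^a E ⊗ Λ^r M → Λ F / G^{r-1}` with image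
`G^r / G^{r-1}`, where `a + r = m`. At a prime outside `V(J)` the module `M` is free, so that, up to a
scalar `s` outside the prime, `f` has a retraction `p`. The shuffle product of `Λ^a p` and `Λ^r g`
then inverts `gradedMap` on the left up to `s ^ a` (`smul_eq_zero_of_gradedMap_eq_zero`). Hence the
kernel of `gradedMap` is killed by a power of `J`, and it is zero once `Λ^r M`, and with it the source,
has positive depth (`gradedMap_injective`). This gives the second claim as soon as the depth of
`Λ^r M` is known.

The depth bound follows by induction on `m` (`depthGE_exteriorPower`). For `r < m` the graded pieces
are finite powers of `Λ^r M`, of depth at least `k - r`, so `G^r` has depth at least `k - r`; then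
`0 → G^{m-1} → Λ^m F → Λ^m M → 0` yields depth at least `k - m` for `Λ^m M`.
-/

open ExteriorAlgebra TensorProduct

universe u

/-! ### Comparison of the two constructions of Ext -/

section Bridge
open CategoryTheory Limits
variable {R : Type u} [CommRing R]

/-- The `i`-cochain `z` of `Hom(P, Y)` is a coboundary. In degree `0` the differential into
`next 0 = 0` is zero, so a coboundary is zero there. -/
def IsCob {X : ModuleCat.{u} R} (P : ProjectiveResolution X) (Y : ModuleCat.{u} R) (i : ℕ)
    (z : P.complex.X i ⟶ Y) : Prop :=
  ∃ w : P.complex.X ((ComplexShape.down ℕ).next i) ⟶ Y,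
    P.complex.d i ((ComplexShape.down ℕ).next i) ≫ w = z

/-- A cocycle of `Hom(P, Y)` represents zero in the derived-category `Abelian.Ext` exactly when it is
a coboundary. -/
theorem extMk_eq_zero_iff_isCob {X Y : ModuleCat.{u} R} (P : ProjectiveResolution X) (i : ℕ)
    (z : P.complex.X i ⟶ Y) (hz : P.complex.d (i + 1) i ≫ z = 0) :
    P.extMk z (i + 1) rfl hz = 0 ↔ IsCob P Y i z := by
  cases i with
  | succ p =>
    have h : (ComplexShape.down ℕ).next (p + 1) = p := by simp
    rw [P.extMk_eq_zero_iff z _ rfl hz p rfl, IsCob, h]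
  | zero =>
    have hd : P.complex.d 0 ((ComplexShape.down ℕ).next 0) = 0 :=
      P.complex.shape _ _ (by simp)
    simp only [IsCob, hd, zero_comp, exists_const]
    constructor
    · intro h
      rw [← P.extEquivCohomologyClass.apply_eq_iff_eq, P.extEquivCohomologyClass_extMk,
        P.extEquivCohomologyClass_zero, CochainComplex.HomComplex.CohomologyClass.mk_eq_zero_iff,
        CochainComplex.HomComplex.Cocycle.toSingleMk_mem_coboundaries_iff _ _ _ _ _ 1 (by simp)] at h
      obtain ⟨w, hw⟩ := h
      have h0 : P.cochainComplex.d (-((0 : ℕ) : ℤ)) 1 = 0 :=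
        (P.cochainComplex.isZero_of_isStrictlyLE 0 1 (by lia)).eq_of_tgt _ _
      rw [h0, zero_comp] at hw
      rw [← cancel_epi (P.cochainComplexXIso (-((0 : ℕ) : ℤ)) 0 rfl).hom, ← hw, comp_zero]
    · rintro rfl
      simp

/-- Vanishing of the left-derived-functor `Ext`, from which local cohomology is built, in terms of
the cochains of a projective resolution. -/
theorem isZero_ext_iff_isCob {X Y : ModuleCat.{u} R} (P : ProjectiveResolution X) (i : ℕ) :
    IsZero (((_root_.Ext R (ModuleCat.{u} R) i).obj (Opposite.op X)).obj Y) ↔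
    ∀ (z : P.complex.X i ⟶ Y) (_ : P.complex.d (i + 1) i ≫ z = 0), IsCob P Y i z := by
  have h : (ComplexShape.down ℕ).prev i = i + 1 := by simp
  rw [(P.isoExt i Y).isZero_iff, ← HomologicalComplex.exactAt_iff_isZero_homology,
    HomologicalComplex.exactAt_iff, ShortComplex.moduleCat_exact_iff, ← h]
  rfl

/-- A cycle with trivial homology class comes from the preceding term. -/
theorem exists_toCycles_eq (M : CochainComplex (ModuleCat.{u} R) ℕ) (i j : ℕ)
    (hj : (ComplexShape.up ℕ).prev i = j) (c : M.cycles i) (hc : M.homologyπ i c = 0) :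
    ∃ y : M.X j, M.toCycles j i y = c := by
  have := ShortComplex.exact_of_g_is_cokernel
    (ShortComplex.mk (M.toCycles j i) (M.homologyπ i) (by simp)) (M.homologyIsCokernel j i hj)
  rw [ShortComplex.moduleCat_exact_iff] at this
  exact this c hc

/-- Injectivity on cohomology, checked on cocycles: a cocycle whose image is a coboundary must be a
coboundary. -/
theorem mono_homologyMap {K L : CochainComplex (ModuleCat.{u} R) ℕ} (ψ : K ⟶ L) (i j : ℕ)
    (hj : (ComplexShape.up ℕ).prev i = j)
    (h : ∀ z : K.X i, K.d i (i + 1) z = 0 → (∃ y : L.X j, L.d j i y = ψ.f i z) →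
      ∃ w : K.X j, K.d j i w = z) :
    Mono (HomologicalComplex.homologyMap ψ i) := by
  rw [ModuleCat.mono_iff_injective, injective_iff_map_eq_zero]
  intro x hx
  obtain ⟨c, rfl⟩ := (ModuleCat.epi_iff_surjective _).1
    (inferInstance : Epi (K.homologyπ i)) x
  have h1 : L.homologyπ i (HomologicalComplex.cyclesMap ψ i c) = 0 := by
    rw [← hx, ← ConcreteCategory.comp_apply, ← ConcreteCategory.comp_apply,
      HomologicalComplex.homologyπ_naturality]
  obtain ⟨y, hy⟩ := exists_toCycles_eq L i j hj _ h1
  obtain ⟨w, hw⟩ := h (K.iCycles i c) (by rw [← ConcreteCategory.comp_apply, K.iCycles_d]; rfl)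
    ⟨y, by
      rw [← ConcreteCategory.comp_apply, ← HomologicalComplex.cyclesMap_i,
        ConcreteCategory.comp_apply, ← hy, ← ConcreteCategory.comp_apply, L.toCycles_i]⟩
  have hc : K.toCycles j i w = c := by
    apply (ModuleCat.mono_iff_injective (K.iCycles i)).1 inferInstance
    rw [← ConcreteCategory.comp_apply, K.toCycles_i, hw]
  rw [← hc, ← ConcreteCategory.comp_apply, K.toCycles_comp_homologyπ]
  rfl

theorem epi_of_iso_square {C : Type*} [Category C] {A A' B B' : C} {m : A ⟶ B} {m' : A' ⟶ B'}
    (e : A ≅ A') (e' : B ≅ B') (h : m ≫ e'.hom = e.hom ≫ m') [Epi m'] : Epi m := by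
  rw [(Iso.eq_comp_inv e').2 h]
  infer_instance

/-- If precomposition with `g` is injective on `Abelian.Ext`, so is the map induced by `g` on the
left-derived-functor `Ext`. -/
theorem mono_ext_map_of_precomp_injective {X X' Y : ModuleCat.{u} R} (g : X' ⟶ X) (i : ℕ)
    (h : ∀ x : Abelian.Ext X Y i, (Abelian.Ext.mk₀ g).comp x (zero_add i) = 0 → x = 0) :
    Mono (((_root_.Ext R (ModuleCat.{u} R) i).map g.op).app Y) := by
  let P := ProjectiveResolution.of X'
  let Q := ProjectiveResolution.of X
  let φ := ProjectiveResolution.lift g P Q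
  let F := ((linearYoneda R (ModuleCat.{u} R)).obj Y).rightOp
  have hm : Epi ((F.mapHomologicalComplex _ ⋙ HomologicalComplex.homologyFunctor _ _ i).map φ) := by
    let ψ : Q.complex.linearYonedaObj R Y ⟶ P.complex.linearYonedaObj R Y :=
      (HomologicalComplex.unopFunctor _ _).map ((F.mapHomologicalComplex _).map φ).op
    have hψ : Mono (HomologicalComplex.homologyMap ψ i) := by
      apply mono_homologyMap ψ i _ rfl
      intro (z : Q.complex.X i ⟶ Y) (hz : Q.complex.d (i + 1) i ≫ z = 0)
        (hφ : IsCob P Y i (φ.f i ≫ z))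
      have hφz : P.complex.d (i + 1) i ≫ φ.f i ≫ z = 0 := by
        rw [← φ.comm_assoc, hz, comp_zero]
      change IsCob Q Y i z
      rw [← extMk_eq_zero_iff_isCob Q i z hz]
      apply h
      -- naturality of the class of a cocycle along a lift of `g` to the resolutions
      let Φ : ProjectiveResolution.Hom P Q g := ⟨φ, by
        have := ProjectiveResolution.lift_commutes g P Q
        rw [← HomologicalComplex.comp_f, this, HomologicalComplex.comp_f]⟩
      rw [ProjectiveResolution.mk₀_comp_extMk z _ rfl hz Φ]
      exact (extMk_eq_zero_iff_isCob P i _ hφz).2 hφ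
    exact epi_of_iso_square _ _ (HomologicalComplex.homologyOp_hom_naturality ψ (i := i))
  have he : Epi ((F.leftDerived i).map g) := by
    rw [F.leftDerived_map_eq i g φ (ProjectiveResolution.lift_commutes g P Q)]
    infer_instance
  change Mono ((F.leftDerived i).map g).unop
  infer_instance
end Bridge

/-! ### Depth along a closed subset and local cohomology -/

section Depth
open CategoryTheory Limits
variable {R : Type u} [CommRing R]

/-- `N` has depth at least `k` along `V(J)`, in the form `Ext^i(T, N) = 0` for all `i < k` and all
finitely generated `T` killed by a power of `J`. Quantifying over all such `T` makes dévissage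
immediate; `depthGE_of_localCohomology` and `subsingleton_localCohomology_of_depthGE` compare this
with local cohomology. -/
def DepthGE (J : Ideal R) (N : ModuleCat.{u} R) (k : ℕ) : Prop :=
  ∀ i < k, ∀ T : ModuleCat.{u} R, Module.Finite R T → (∃ n : ℕ, J ^ n ≤ Module.annihilator R T) →
    ∀ x : Abelian.Ext T N i, x = 0

variable {J : Ideal R}

theorem DepthGE.mono {N : ModuleCat.{u} R} {k k' : ℕ} (h : DepthGE J N k) (hk : k' ≤ k) :
    DepthGE J N k' := fun i hi => h i (hi.trans_le hk)

theorem DepthGE.of_iso {N N' : ModuleCat.{u} R} (e : N ≅ N') {k : ℕ} (h : DepthGE J N k) :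
    DepthGE J N' k := by
  intro i hi T hT hJ x
  have := h i hi T hT hJ (x.comp (Abelian.Ext.mk₀ e.inv) (add_zero i))
  have h2 : (x.comp (Abelian.Ext.mk₀ e.inv) (add_zero i)).comp (Abelian.Ext.mk₀ e.hom)
      (add_zero i) = x := by
    rw [Abelian.Ext.comp_assoc_of_third_deg_zero, Abelian.Ext.mk₀_comp_mk₀, e.inv_hom_id,
      Abelian.Ext.comp_mk₀_id]
  rw [← h2, this, Abelian.Ext.zero_comp]

theorem DepthGE.middle {S : ShortComplex (ModuleCat.{u} R)} (hS : S.ShortExact) {k : ℕ}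
    (h₁ : DepthGE J S.X₁ k) (h₃ : DepthGE J S.X₃ k) : DepthGE J S.X₂ k := by
  intro i hi T hT hJ x
  obtain ⟨y, rfl⟩ := Abelian.Ext.covariant_sequence_exact₂ T hS x (h₃ i hi T hT hJ _)
  rw [h₁ i hi T hT hJ y, Abelian.Ext.zero_comp]

/-- The cokernel of an injection loses at most one from the depth of the submodule. -/
theorem DepthGE.right {S : ShortComplex (ModuleCat.{u} R)} (hS : S.ShortExact) {k : ℕ}
    (h₁ : DepthGE J S.X₁ (k + 1)) (h₂ : DepthGE J S.X₂ k) : DepthGE J S.X₃ k := by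
  intro i hi T hT hJ x
  obtain ⟨y, rfl⟩ := Abelian.Ext.covariant_sequence_exact₃ T hS x rfl
    (h₁ (i + 1) (by lia) T hT hJ _)
  rw [h₂ i hi T hT hJ y, Abelian.Ext.zero_comp]

theorem DepthGE.middle' {A B C : Type u} [AddCommGroup A] [Module R A] [AddCommGroup B]
    [Module R B] [AddCommGroup C] [Module R C] {k : ℕ} (a : A →ₗ[R] B) (b : B →ₗ[R] C)
    (ha : Function.Injective a) (hab : Function.Exact a b) (hb : Function.Surjective b)
    (h₁ : DepthGE J (.of R A) k) (h₃ : DepthGE J (.of R C) k) : DepthGE J (.of R B) k :=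
  DepthGE.middle (S := ModuleCat.shortComplexOfCompEqZero a b hab.linearMap_comp_eq_zero)
    (ModuleCat.shortComplex_shortExact _ hab ha hb) h₁ h₃

theorem DepthGE.pi {N : Type u} [AddCommGroup N] [Module R N] {k : ℕ}
    (h : DepthGE J (.of R N) k) (n : ℕ) : DepthGE J (.of R (Fin n → N)) k := by
  induction n with
  | zero =>
    intro i hi T hT hJ x
    have h0 : IsZero (ModuleCat.of R (Fin 0 → N)) := ModuleCat.isZero_of_subsingleton _
    rw [← x.comp_mk₀_id, h0.eq_of_src (𝟙 _) 0, Abelian.Ext.mk₀_zero, Abelian.Ext.comp_zero]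
  | succ n ih =>
    refine DepthGE.of_iso (Fin.consLinearEquiv R (fun _ : Fin (n + 1) => N)).toModuleIso ?_
    exact DepthGE.middle' (LinearMap.inl R N (Fin n → N)) (LinearMap.snd R N (Fin n → N))
      LinearMap.inl_injective Function.Exact.inl_snd LinearMap.snd_surjective h ih


theorem ext_eq_zero_pi {Q N : Type u} [AddCommGroup Q] [Module R Q] [AddCommGroup N] [Module R N]
    {i : ℕ} (h : ∀ x : Abelian.Ext (ModuleCat.of R Q) (ModuleCat.of R N) i, x = 0) (n : ℕ) :
    ∀ x : Abelian.Ext (ModuleCat.of R (Fin n → Q)) (ModuleCat.of R N) i, x = 0 := by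
  induction n with
  | zero =>
    intro x
    have h0 : IsZero (ModuleCat.of R (Fin 0 → Q)) := ModuleCat.isZero_of_subsingleton _
    rw [← x.mk₀_id_comp, h0.eq_of_src (𝟙 _) 0, Abelian.Ext.mk₀_zero, Abelian.Ext.zero_comp]
  | succ n ih =>
    intro x
    let e := (Fin.consLinearEquiv R (fun _ : Fin (n + 1) => Q)).toModuleIso
    have hS : (ModuleCat.shortComplexOfCompEqZero (LinearMap.inl R Q (Fin n → Q))
        (LinearMap.snd R Q (Fin n → Q)) (by ext; simp)).ShortExact :=
      ModuleCat.shortComplex_shortExact _ Function.Exact.inl_snd LinearMap.inl_injective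
        LinearMap.snd_surjective
    have hx : (Abelian.Ext.mk₀ e.hom).comp x (zero_add i) = 0 := by
      obtain ⟨y, hy⟩ := Abelian.Ext.contravariant_sequence_exact₂ hS (.of R N)
        ((Abelian.Ext.mk₀ e.hom).comp x (zero_add i)) (h _)
      rw [← hy, ih y, Abelian.Ext.comp_zero]
    rw [← x.mk₀_id_comp, ← e.inv_hom_id, ← Abelian.Ext.mk₀_comp_mk₀_assoc, hx,
      Abelian.Ext.comp_zero]

/-- The kernel of `g` is again torsion, so its `Ext^{i-1}` into `N` vanishes and the long exact
sequence makes `Ext^i(X, N) → Ext^i(X', N)` injective. -/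
theorem ext_restrict_injective [IsNoetherianRing R] {N X X' : ModuleCat.{u} R} {i : ℕ}
    (hN : DepthGE J N i) (g : X' ⟶ X) [hg : Epi g] [Module.Finite R X']
    (hJ : ∃ n : ℕ, J ^ n ≤ Module.annihilator R X') (x : Abelian.Ext X N i)
    (hx : (Abelian.Ext.mk₀ g).comp x (zero_add i) = 0) : x = 0 := by
  cases i with
  | zero => exact Abelian.Ext.precomp_mk₀_injective_of_epi N g (by simpa using hx)
  | succ j =>
    have hS : (ModuleCat.shortComplexOfCompEqZero (LinearMap.ker g.hom).subtype g.hom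
        (by ext; simp)).ShortExact :=
      ModuleCat.shortComplex_shortExact _ (LinearMap.exact_subtype_ker_map g.hom)
        (Submodule.injective_subtype _) ((ModuleCat.epi_iff_surjective g).1 hg)
    obtain ⟨y, rfl⟩ := Abelian.Ext.contravariant_sequence_exact₃ hS N x hx (add_comm 1 j)
    obtain ⟨n, hn⟩ := hJ
    rw [hN j (by lia) (.of R (LinearMap.ker g.hom)) inferInstance ⟨n, hn.trans
      (LinearMap.annihilator_le_of_injective _ (Submodule.injective_subtype _))⟩ y,
      Abelian.Ext.comp_zero]

theorem le_annihilator_quot (n : ℕ) : J ^ n ≤ Module.annihilator R (ModuleCat.of R (R ⧸ J ^ n)) :=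
  (Ideal.annihilator_quotient (I := J ^ n)).ge

/-- Given vanishing below degree `i`, vanishing in degree `i` need only be tested on the modules
`R ⧸ J ^ n`, since every torsion module is a quotient of a finite power of one of them. -/
theorem depthGE_succ [IsNoetherianRing R] {N : ModuleCat.{u} R} {i : ℕ} (hN : DepthGE J N i)
    (h : ∀ n, ∀ x : Abelian.Ext (ModuleCat.of R (R ⧸ J ^ n)) N i, x = 0) : DepthGE J N (i + 1) := by
  intro j hj T hT ⟨n, hn⟩ x
  obtain hj | rfl := Nat.lt_succ_iff_lt_or_eq.1 hj
  · exact hN j hj T hT ⟨n, hn⟩ x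
  obtain ⟨a, t, ht⟩ := Module.Finite.exists_fin (R := R) (M := T)
  let l (c : Fin a) : (R ⧸ J ^ n) →ₗ[R] T := Submodule.liftQ (J ^ n)
    (LinearMap.toSpanSingleton R T (t c)) fun r hr => by
      exact Module.mem_annihilator.1 (hn hr) (t c)
  let L : (Fin a → R ⧸ J ^ n) →ₗ[R] T := LinearMap.lsum R _ R l
  have hL : Function.Surjective L := by
    rw [← LinearMap.range_eq_top, eq_top_iff, ← ht, Submodule.span_le]
    rintro _ ⟨c, rfl⟩
    refine ⟨Pi.single c (Submodule.Quotient.mk 1), ?_⟩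
    simp only [L]
    rw [LinearMap.lsum_piSingle]
    exact one_smul R (t c)
  have : Epi (ModuleCat.ofHom L) := (ModuleCat.epi_iff_surjective _).2 hL
  have : Module.Finite R (ModuleCat.of R (Fin a → R ⧸ J ^ n)) :=
    inferInstanceAs (Module.Finite R (Fin a → R ⧸ J ^ n))
  refine ext_restrict_injective hN (ModuleCat.ofHom L) ⟨n, ?_⟩ x (ext_eq_zero_pi (h n) a _)
  intro r hr
  rw [Module.mem_annihilator]
  intro v
  funext c
  exact Module.mem_annihilator.1 (le_annihilator_quot n hr) (v c)

/-- The two constructions of `Ext` in Mathlib vanish simultaneously. -/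
theorem isZero_ext_iff {X N : ModuleCat.{u} R} (i : ℕ) :
    IsZero (((_root_.Ext R (ModuleCat.{u} R) i).obj (Opposite.op X)).obj N) ↔
      ∀ x : Abelian.Ext X N i, x = 0 := by
  let P := ProjectiveResolution.of X
  rw [isZero_ext_iff_isCob P]
  constructor
  · intro h x
    obtain ⟨z, hz, rfl⟩ := P.extMk_surjective x (i + 1) rfl
    exact (extMk_eq_zero_iff_isCob P i z hz).2 (h z hz)
  · exact fun h z hz => (extMk_eq_zero_iff_isCob P i z hz).1 (h _)

/-- The direct system `n ↦ Ext^i(R ⧸ J ^ n, N)` whose colimit is the local cohomology of `N`. -/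
noncomputable abbrev lcDiagram (J : Ideal R) (N : ModuleCat.{u} R) (i : ℕ) :
    ℕᵒᵖᵒᵖ ⥤ ModuleCat.{u} R :=
  localCohomology.diagram (localCohomology.idealPowersDiagram J) i ⋙ (evaluation _ _).obj N

instance (N : ModuleCat.{u} R) (i : ℕ) :
    PreservesColimit (lcDiagram J N i) (forget (ModuleCat.{u} R)) := by
  have : PreservesFilteredColimitsOfSize.{0, 0} (forget (ModuleCat.{u} R)) :=
    preservesFilteredColimitsOfSize_shrink.{0, u, 0, u} _
  have : PreservesColimitsOfShape ℕᵒᵖᵒᵖ (forget (ModuleCat.{u} R)) :=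
    PreservesFilteredColimitsOfSize.preserves_filtered_colimits _
  infer_instance

theorem subsingleton_localCohomology_iff (N : ModuleCat.{u} R) (i : ℕ) :
    Subsingleton ((localCohomology J i).obj N) ↔ Subsingleton ↑(colimit (lcDiagram J N i)) := by
  have := localCohomology.hasColimitDiagram.{u, 0} (localCohomology.idealPowersDiagram J) i
  let e : (localCohomology J i).obj N ≅ colimit (lcDiagram J N i) :=
    colimitObjIsoColimitCompEvaluation _ _
  exact e.toLinearEquiv.toEquiv.subsingleton_congr

theorem subsingleton_localCohomology_of_depthGE {N : ModuleCat.{u} R} {k : ℕ}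
    (h : DepthGE J N k) (i : ℕ) (hi : i < k) : Subsingleton ((localCohomology J i).obj N) := by
  rw [subsingleton_localCohomology_iff]
  refine subsingleton_of_forall_eq 0 fun x => ?_
  obtain ⟨j, y, rfl⟩ := Concrete.colimit_exists_rep _ x
  have hz : IsZero ((lcDiagram J N i).obj j) :=
    (isZero_ext_iff i).2 (h i hi _ (inferInstanceAs (Module.Finite R (R ⧸ J ^ j.unop.unop)))
      ⟨_, le_annihilator_quot _⟩)
  have := ModuleCat.subsingleton_of_isZero hz
  rw [Subsingleton.elim y 0, map_zero]

/-- By induction the transition maps of `lcDiagram` in degree `i` are injective, so that the vanishing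
of the colimit forces the vanishing of every term. -/
theorem depthGE_of_localCohomology [IsNoetherianRing R] {N : ModuleCat.{u} R} {k : ℕ}
    (h : ∀ i < k, Subsingleton ((localCohomology J i).obj N)) : DepthGE J N k := by
  induction k with
  | zero => exact fun i hi => absurd hi (by simp)
  | succ i ih =>
    have hN := ih fun j hj => h j (by lia)
    refine depthGE_succ hN fun n => (isZero_ext_iff i).1 ?_
    have hs := (subsingleton_localCohomology_iff N i).1 (h i (by lia))
    let j : ℕᵒᵖᵒᵖ := .op (.op n)
    change IsZero ((lcDiagram J N i).obj j)
    refine @ModuleCat.isZero_of_subsingleton _ _ _ (subsingleton_of_forall_eq 0 fun y => ?_)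
    obtain ⟨j', w, hw⟩ := Concrete.colimit_rep_eq_zero R (lcDiagram J N i) j y (Subsingleton.elim _ _)
    let G : ModuleCat.of R (R ⧸ J ^ j'.unop.unop) ⟶ ModuleCat.of R (R ⧸ J ^ n) :=
      (localCohomology.ringModIdeals (localCohomology.idealPowersDiagram J)).map w.unop
    have : Epi G := by
      rw [ModuleCat.epi_iff_surjective]
      intro z
      obtain ⟨z, rfl⟩ := Submodule.Quotient.mk_surjective _ z
      exact ⟨Submodule.Quotient.mk z, rfl⟩
    have : Module.Finite R (ModuleCat.of R (R ⧸ J ^ j'.unop.unop)) :=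
      inferInstanceAs (Module.Finite R (R ⧸ J ^ j'.unop.unop))
    have hm : Mono (((_root_.Ext R (ModuleCat.{u} R) i).map G.op).app N) :=
      mono_ext_map_of_precomp_injective G i (ext_restrict_injective hN G ⟨_, le_annihilator_quot _⟩)
    rw [ModuleCat.mono_iff_injective] at hm
    exact hm (hw.trans (map_zero _).symm)
theorem DepthGE.right' {A B C : Type u} [AddCommGroup A] [Module R A] [AddCommGroup B]
    [Module R B] [AddCommGroup C] [Module R C] {k : ℕ} (a : A →ₗ[R] B) (b : B →ₗ[R] C)
    (ha : Function.Injective a) (hab : Function.Exact a b) (hb : Function.Surjective b)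
    (h₁ : DepthGE J (.of R A) (k + 1)) (h₂ : DepthGE J (.of R B) k) : DepthGE J (.of R C) k :=
  DepthGE.right (S := ModuleCat.shortComplexOfCompEqZero a b hab.linearMap_comp_eq_zero)
    (ModuleCat.shortComplex_shortExact _ hab ha hb) h₁ h₂

theorem DepthGE.bot {N : Type u} [AddCommGroup N] [Module R N] (k : ℕ) :
    DepthGE J (.of R (⊥ : Submodule R N)) k := by
  intro i _ T _ _ x
  have h0 : IsZero (ModuleCat.of R (⊥ : Submodule R N)) :=
    ModuleCat.isZero_of_subsingleton _
  rw [← x.comp_mk₀_id, h0.eq_of_src (𝟙 _) 0,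
    Abelian.Ext.mk₀_zero, Abelian.Ext.comp_zero]

/-- Positive depth along `V(J)` excludes nonzero submodules killed by a power of `J`: the inclusion
of such a submodule is a class in `Ext^0`. -/
theorem DepthGE.eq_bot [IsNoetherianRing R] {N : Type u} [AddCommGroup N] [Module R N]
    [Module.Finite R N] (h : DepthGE J (.of R N) 1) (K : Submodule R N) (hK : ∃ n : ℕ, J ^ n ≤ Module.annihilator R K) :
    K = ⊥ := by
  have h0 := h 0 one_pos (.of R K) inferInstance hK
    (Abelian.Ext.mk₀ (ModuleCat.ofHom K.subtype))
  rw [Abelian.Ext.mk₀_eq_zero_iff] at h0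
  rw [Submodule.eq_bot_iff]
  intro x hx
  exact LinearMap.congr_fun (congrArg ModuleCat.Hom.hom h0) (⟨x, hx⟩ : K)

theorem DepthGE.of_linearEquiv {N N' : Type u} [AddCommGroup N] [Module R N] [AddCommGroup N']
    [Module R N'] (e : N ≃ₗ[R] N') {k : ℕ} (h : DepthGE J (.of R N) k) :
    DepthGE J (.of R N') k :=
  h.of_iso e.toModuleIso

theorem DepthGE.tensor {L N : Type u} [AddCommGroup L] [Module R L] [Module.Free R L]
    [Module.Finite R L] [AddCommGroup N] [Module R N] {k : ℕ} (h : DepthGE J (.of R N) k) :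
    DepthGE J (.of R (L ⊗[R] N)) k := by
  let b := (Module.Free.chooseBasis R L).reindex (Fintype.equivFin _)
  exact (h.pi _).of_linearEquiv ((TensorProduct.comm R L N).trans
    ((LinearEquiv.lTensor N b.equivFun).trans (TensorProduct.piScalarRight R R N _))).symm

theorem DepthGE.free {L : Type u} [AddCommGroup L] [Module R L] [Module.Free R L]
    [Module.Finite R L] {k : ℕ} (h : DepthGE J (.of R R) k) : DepthGE J (.of R L) k :=
  (h.tensor (L := L)).of_linearEquiv (TensorProduct.rid R L)

end Depth

/-! ### The graded maps of the wedge filtration -/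

section Descend
variable {R F M N : Type*} [CommRing R] [AddCommGroup F] [Module R F] [AddCommGroup M] [Module R M]
  [AddCommGroup N] [Module R N] {κ : Type*}

/-- An alternating map vanishing as soon as one argument lies in `ker g` depends only on the images
of its arguments under `g`. -/
theorem AlternatingMap.apply_eq_of_comp_eq [Fintype κ] (g : F →ₗ[R] M) (α : F [⋀^κ]→ₗ[R] N)
    (hα : ∀ x : κ → F, (∃ i, g (x i) = 0) → α x = 0) (x y : κ → F) (hxy : g ∘ x = g ∘ y) :
    α x = α y := by
  classical
  -- change the coordinates of `y` into those of `x` one at a time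
  suffices h : ∀ s : Finset κ, α (s.piecewise x y) = α y by simpa using h Finset.univ
  intro s
  induction s using Finset.induction_on with
  | empty => simp
  | insert j s hj ih =>
    have h1 : s.piecewise x y = Function.update (s.piecewise x y) j (y j) := by
      simp [Finset.piecewise_eq_of_notMem _ _ _ hj]
    rw [Finset.piecewise_insert, ← ih, ← sub_eq_zero]
    conv_lhs => rw [h1, Function.update_idem]
    rw [← α.map_update_sub]
    refine hα _ ⟨j, ?_⟩
    simpa [sub_eq_zero] using congrFun hxy j

theorem AlternatingMap.apply_surjInv_update [Fintype κ] [DecidableEq κ] (g : F →ₗ[R] M)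
    (hg : Function.Surjective g) (α : F [⋀^κ]→ₗ[R] N)
    (hα : ∀ x : κ → F, (∃ i, g (x i) = 0) → α x = 0) (v : κ → M) (i : κ) (c : M) (d : F)
    (hd : g d = c) : α (fun j => Function.surjInv hg (Function.update v i c j)) =
      α (Function.update (fun j => Function.surjInv hg (v j)) i d) := by
  refine AlternatingMap.apply_eq_of_comp_eq g α hα _ _ (funext fun j => ?_)
  by_cases hj : j = i
  · subst hj; simp [Function.surjInv_eq, hd]
  · simp [hj, Function.surjInv_eq]

/-- The alternating map on `M` induced, along a surjection `g : F → M`, by an alternating map on `F`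
that vanishes as soon as one argument lies in `ker g`. -/
noncomputable def AlternatingMap.descend [Fintype κ] (g : F →ₗ[R] M) (hg : Function.Surjective g)
    (α : F [⋀^κ]→ₗ[R] N) (hα : ∀ x : κ → F, (∃ i, g (x i) = 0) → α x = 0) : M [⋀^κ]→ₗ[R] N where
  toFun v := α fun i => Function.surjInv hg (v i)
  map_update_add' v i a b := by
    have key := AlternatingMap.apply_surjInv_update g hg α hα v i
    rw [key _ (Function.surjInv hg a + Function.surjInv hg b) (by simp [Function.surjInv_eq]),
      key a _ (Function.surjInv_eq hg a), key b _ (Function.surjInv_eq hg b), α.map_update_add]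
  map_update_smul' v i c a := by
    have key := AlternatingMap.apply_surjInv_update g hg α hα v i
    rw [key _ (c • Function.surjInv hg a) (by simp [Function.surjInv_eq]),
      key a _ (Function.surjInv_eq hg a), α.map_update_smul]
  map_eq_zero_of_eq' v i j hv hij :=
    α.map_eq_zero_of_eq _ (by simp [hv]) hij

theorem AlternatingMap.descend_comp [Fintype κ] (g : F →ₗ[R] M) (hg : Function.Surjective g)
    (α : F [⋀^κ]→ₗ[R] N) (hα : ∀ x : κ → F, (∃ i, g (x i) = 0) → α x = 0) (x : κ → F) :
    α.descend g hg hα (g ∘ x) = α x :=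
  AlternatingMap.apply_eq_of_comp_eq g α hα _ _ (funext fun j => by simp [Function.surjInv_eq])
end Descend

section Graded
variable {R E F M : Type*} [CommRing R] [AddCommGroup E] [Module R E] [AddCommGroup F] [Module R F]
  [AddCommGroup M] [Module R M]

/-- The step `Λ^a E ∧ Λ^r F` of the wedge filtration on `Λ^{a+r} F`, as a submodule of the exterior
algebra of `F`. Here `a` is the number of factors taken from `E`. -/
def wedgeStep (f : E →ₗ[R] F) (a r : ℕ) : Submodule R (ExteriorAlgebra R F) :=
  LinearMap.range ((ι R).comp f) ^ a * LinearMap.range (ι R : F →ₗ[R] ExteriorAlgebra R F) ^ r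

theorem range_pow_eq_map (f : E →ₗ[R] F) (a : ℕ) : LinearMap.range ((ι R).comp f) ^ a =
    (⋀[R]^a E).map (ExteriorAlgebra.map f).toLinearMap := by
  rw [exteriorPower, Submodule.map_pow]
  congr 1
  rw [← LinearMap.range_comp]
  congr 1
  ext x
  simp

theorem wedgeStep_eq_span (f : E →ₗ[R] F) (a r : ℕ) : wedgeStep f a r =
    Submodule.span R (Set.range fun p : (Fin a → E) × (Fin r → F) =>
      ιMulti R (a + r) (Fin.append (f ∘ p.1) p.2)) := by
  rw [wedgeStep, range_pow_eq_map]
  change _ * ⋀[R]^r F = _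
  rw [← ιMulti_span_fixedDegree, ← ιMulti_span_fixedDegree, Submodule.map_span,
    Submodule.span_mul_span]
  congr 1
  ext y
  simp only [Set.mem_mul, Set.mem_image, Set.mem_range, Prod.exists]
  constructor
  · rintro ⟨_, ⟨_, ⟨e, rfl⟩, rfl⟩, _, ⟨x, rfl⟩, rfl⟩
    exact ⟨e, x, by simp [← ιMulti_mul_ιMulti]⟩
  · rintro ⟨e, x, rfl⟩
    exact ⟨_, ⟨_, ⟨e, rfl⟩, rfl⟩, _, ⟨x, rfl⟩, by simp [← ιMulti_mul_ιMulti]⟩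

/-- The step `G^{r-1}` preceding `G^r = wedgeStep f a r` in the wedge filtration on `Λ^{a+r} F`, with
the convention `G^{-1} = 0`. -/
def prevStep (f : E →ₗ[R] F) (a : ℕ) : ℕ → Submodule R (ExteriorAlgebra R F)
  | 0 => ⊥
  | r + 1 => wedgeStep f (a + 1) r

theorem prevStep_le (f : E →ₗ[R] F) (a r : ℕ) : prevStep f a r ≤ wedgeStep f a r := by
  cases r with
  | zero => exact bot_le
  | succ r =>
    rw [prevStep, wedgeStep, wedgeStep, pow_succ, pow_succ', mul_assoc]
    gcongr
    exact LinearMap.range_comp_le_range _ _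

/-- Replacing a factor of `F` by one in `E` goes down one step of the filtration. -/
theorem mul_mem_prevStep {f : E →ₗ[R] F} {g : F →ₗ[R] M} (hfg : LinearMap.range f = LinearMap.ker g)
    {a r : ℕ} (y : ExteriorAlgebra R F) (hy : y ∈ LinearMap.range ((ι R).comp f) ^ a)
    (x : Fin r → F) (hx : ∃ i, g (x i) = 0) : y * ιMulti R r x ∈ prevStep f a r := by
  obtain ⟨i, hi⟩ := hx
  cases r with
  | zero => exact i.elim0
  | succ r =>
    have hxi : x i ∈ LinearMap.range f := by rw [hfg]; exact hi
    have h0 : ∀ z : Fin (r + 1) → F, z 0 ∈ LinearMap.range f →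
        y * ιMulti R (r + 1) z ∈ prevStep f a (r + 1) := by
      rintro z ⟨e, he⟩
      rw [ιMulti_succ_apply, ← mul_assoc, prevStep, wedgeStep, pow_succ]
      refine Submodule.mul_mem_mul (Submodule.mul_mem_mul hy ⟨e, by simp [he]⟩) ?_
      exact ιMulti_range R r ⟨_, rfl⟩
    by_cases hi0 : i = 0
    · subst hi0; exact h0 x hxi
    · have := h0 (x ∘ Equiv.swap 0 i) (by simpa using hxi)
      rwa [AlternatingMap.map_swap _ _ (Ne.symm hi0), mul_neg, neg_mem_iff] at this

/-- The map `Λ^a E ⊗ Λ^r M → Λ F / G^{r-1}` sending `e ⊗ g x₁ ∧ … ∧ g x_r` to the class of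
`f e ∧ x₁ ∧ … ∧ x_r`; its image is `G^r / G^{r-1}` by `range_gradedMap`. -/
noncomputable def gradedMap (f : E →ₗ[R] F) (g : F →ₗ[R] M) (hg : Function.Surjective g)
    (hfg : LinearMap.range f = LinearMap.ker g) (a r : ℕ) :
    ⋀[R]^a E ⊗[R] ⋀[R]^r M →ₗ[R] ExteriorAlgebra R F ⧸ prevStep f a r :=
  TensorProduct.lift <| LinearMap.flip <| exteriorPower.alternatingMapLinearEquiv <|
    AlternatingMap.descend g hg
      ((((LinearMap.mul R (ExteriorAlgebra R F)).compr₂ (prevStep f a r).mkQ).comp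
        ((ExteriorAlgebra.map f).toLinearMap.comp (⋀[R]^a E).subtype)).flip.compAlternatingMap
          (ιMulti R r)) fun x hx => by
      refine LinearMap.ext fun e => ?_
      refine (Submodule.Quotient.mk_eq_zero _).2 (mul_mem_prevStep hfg _ ?_ x hx)
      rw [range_pow_eq_map]
      exact ⟨e, e.2, rfl⟩

theorem gradedMap_tmul (f : E →ₗ[R] F) (g : F →ₗ[R] M) (hg : Function.Surjective g)
    (hfg : LinearMap.range f = LinearMap.ker g) {a r : ℕ} (e : Fin a → E) (x : Fin r → F) :
    gradedMap f g hg hfg a r (exteriorPower.ιMulti R a e ⊗ₜ exteriorPower.ιMulti R r (g ∘ x)) =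
      (prevStep f a r).mkQ (ιMulti R (a + r) (Fin.append (f ∘ e) x)) := by
  rw [gradedMap, TensorProduct.lift.tmul, LinearMap.flip_apply,
    exteriorPower.alternatingMapLinearEquiv_apply_ιMulti, AlternatingMap.descend_comp]
  simp [← ιMulti_mul_ιMulti]

theorem span_tmul_ιMulti {g : F →ₗ[R] M} (hg : Function.Surjective g) (a r : ℕ) :
    Submodule.span R (Set.range fun p : (Fin a → E) × (Fin r → F) =>
      exteriorPower.ιMulti R a p.1 ⊗ₜ[R] exteriorPower.ιMulti R r (g ∘ p.2)) = ⊤ := by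
  have h := congrArg₂ (Submodule.map₂ (TensorProduct.mk R (⋀[R]^a E) (⋀[R]^r M)))
    (exteriorPower.ιMulti_span R a E) (exteriorPower.ιMulti_span R r M)
  rw [TensorProduct.map₂_mk_top_top_eq_top, Submodule.map₂_span_span] at h
  rw [← h]
  congr 1
  ext y
  simp only [Set.mem_image2, Set.mem_range, Prod.exists, TensorProduct.mk_apply]
  constructor
  · rintro ⟨e, x, rfl⟩
    exact ⟨_, ⟨e, rfl⟩, _, ⟨_, rfl⟩, rfl⟩
  · rintro ⟨_, ⟨e, rfl⟩, _, ⟨x, rfl⟩, rfl⟩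
    obtain ⟨x, rfl⟩ := hg.comp_left x
    exact ⟨e, x, rfl⟩

theorem range_gradedMap (f : E →ₗ[R] F) (g : F →ₗ[R] M) (hg : Function.Surjective g)
    (hfg : LinearMap.range f = LinearMap.ker g) (a r : ℕ) :
    LinearMap.range (gradedMap f g hg hfg a r) = (wedgeStep f a r).map (prevStep f a r).mkQ := by
  rw [LinearMap.range_eq_map, ← span_tmul_ιMulti hg, wedgeStep_eq_span, Submodule.map_span,
    Submodule.map_span, ← Set.range_comp, ← Set.range_comp]
  congr 2
  ext p
  exact gradedMap_tmul f g hg hfg _ _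

end Graded

/-! ### Retractions of the graded maps -/

section Retraction
variable {R E F M : Type*} [CommRing R] [AddCommGroup E] [Module R E] [AddCommGroup F] [Module R F]
  [AddCommGroup M] [Module R M]

/-- The shuffle product of `Λ^a p` and `Λ^r g`: the alternating map sending `(v_i)` to the signed sum,
over the ways of choosing `a` of the vectors, of the wedge of the chosen `p v_i` tensored with the
wedge of the remaining `g v_i`. -/
noncomputable def shuffleMap (p : F →ₗ[R] E) (g : F →ₗ[R] M) (a r : ℕ) :
    F [⋀^Fin a ⊕ Fin r]→ₗ[R] (⋀[R]^a E ⊗[R] ⋀[R]^r M) :=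
  ((exteriorPower.ιMulti R a).compLinearMap p).domCoprod
    ((exteriorPower.ιMulti R r).compLinearMap g)

theorem shuffleMap_apply (p : F →ₗ[R] E) (g : F →ₗ[R] M) {a r : ℕ} (v : Fin a ⊕ Fin r → F) :
    shuffleMap p g a r v = ∑ σ : Equiv.Perm.ModSumCongr (Fin a) (Fin r),
      AlternatingMap.domCoprod.summand ((exteriorPower.ιMulti R a).compLinearMap p)
        ((exteriorPower.ιMulti R r).compLinearMap g) σ v := by
  change ((((exteriorPower.ιMulti R a).compLinearMap p).domCoprod
    ((exteriorPower.ιMulti R r).compLinearMap g) :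
      MultilinearMap R (fun _ => F) (⋀[R]^a E ⊗[R] ⋀[R]^r M))) v = _
  rw [AlternatingMap.domCoprod_coe, sum_apply]

theorem summand_mk_apply (p : F →ₗ[R] E) (g : F →ₗ[R] M) {a r : ℕ} (v : Fin a ⊕ Fin r → F)
    (σ : Equiv.Perm (Fin a ⊕ Fin r)) :
    AlternatingMap.domCoprod.summand ((exteriorPower.ιMulti R a).compLinearMap p)
        ((exteriorPower.ιMulti R r).compLinearMap g) (Quotient.mk'' σ) v =
      Equiv.Perm.sign σ • (exteriorPower.ιMulti R a (fun i => p (v (σ (.inl i)))) ⊗ₜ[R]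
        exteriorPower.ιMulti R r (fun j => g (v (σ (.inr j))))) := by
  rw [AlternatingMap.domCoprod.summand_mk'']
  rfl

theorem summand_mk_eq_zero (p : F →ₗ[R] E) (g : F →ₗ[R] M) {a r : ℕ} (v : Fin a ⊕ Fin r → F)
    (σ : Equiv.Perm (Fin a ⊕ Fin r)) (j : Fin r) (hj : g (v (σ (.inr j))) = 0) :
    AlternatingMap.domCoprod.summand ((exteriorPower.ιMulti R a).compLinearMap p)
        ((exteriorPower.ιMulti R r).compLinearMap g) (Quotient.mk'' σ) v = 0 := by
  rw [summand_mk_apply, (exteriorPower.ιMulti R r).map_coord_zero j hj, TensorProduct.tmul_zero,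
    smul_zero]

/-- If more than `a` of the vectors lie in `ker g`, then every shuffle puts one of them into the
factor `Λ^r M`. -/
theorem shuffleMap_eq_zero (p : F →ₗ[R] E) (g : F →ₗ[R] M) {a r : ℕ} (v : Fin a ⊕ Fin r → F)
    (c : Fin (a + 1) → Fin a ⊕ Fin r) (hc : Function.Injective c) (hv : ∀ i, g (v (c i)) = 0) :
    shuffleMap p g a r v = 0 := by
  rw [shuffleMap_apply]
  refine Finset.sum_eq_zero fun σ _ => ?_
  induction σ using Quotient.inductionOn' with | h σ => ?_
  by_cases h : ∃ i j, σ.symm (c i) = .inr j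
  · obtain ⟨i, j, hij⟩ := h
    refine summand_mk_eq_zero p g v σ j ?_
    rw [← hij, Equiv.apply_symm_apply, hv]
  · push Not at h
    have h2 : ∀ i, ∃ b, σ.symm (c i) = .inl b := fun i => by
      rcases hi : σ.symm (c i) with b | b
      · exact ⟨b, rfl⟩
      · exact (h i b hi).elim
    choose b hb using h2
    have hbi : Function.Injective b := fun i i' hii => by
      apply hc
      apply σ.symm.injective
      rw [hb, hb, hii]
    simpa using Fintype.card_le_of_injective b hbi

/-- If `a` of the vectors come from `E`, only the identity shuffle avoids sending one of them to
`Λ^r M`, where it becomes zero. -/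
theorem shuffleMap_sumElim (p : F →ₗ[R] E) {f : E →ₗ[R] F} {g : F →ₗ[R] M} (hfg : g ∘ₗ f = 0)
    {a r : ℕ} (e : Fin a → E) (x : Fin r → F) :
    shuffleMap p g a r (Sum.elim (f ∘ e) x) =
      exteriorPower.ιMulti R a (p ∘ f ∘ e) ⊗ₜ[R] exteriorPower.ιMulti R r (g ∘ x) := by
  rw [shuffleMap_apply]
  refine (Finset.sum_eq_single
    (Quotient.mk'' (1 : Equiv.Perm (Fin a ⊕ Fin r)) : Equiv.Perm.ModSumCongr (Fin a) (Fin r))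
    ?_ ?_).trans ?_
  rotate_left 2
  · rw [summand_mk_apply]
    simp [Function.comp_def]
  · intro σ _ hσ
    induction σ using Quotient.inductionOn' with | h σ => ?_
    by_cases h : ∃ j i, σ (.inr j) = .inl i
    · obtain ⟨j, i, hij⟩ := h
      refine summand_mk_eq_zero p g _ σ j ?_
      rw [hij]
      exact LinearMap.congr_fun hfg (e i)
    · refine (hσ ?_).elim
      push Not at h
      have hr : ∀ j, ∃ b, σ (.inr j) = .inr b := fun j => by
        rcases hj : σ (.inr j) with b | b
        · exact (h j b hj).elim
        · exact ⟨b, rfl⟩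
      choose b hb using hr
      have hbi : Function.Injective b := fun i i' hii => by
        have := σ.injective ((hb i).trans ((congrArg _ hii).trans (hb i').symm))
        simpa using this
      have hbs := Finite.surjective_of_injective hbi
      have hmaps : Set.MapsTo σ (Set.range Sum.inl) (Set.range Sum.inl) := by
        rintro _ ⟨i, rfl⟩
        rcases hi : σ (.inl i) with d | d
        · exact ⟨d, rfl⟩
        · obtain ⟨j, rfl⟩ := hbs d
          rw [← hb] at hi
          simpa using σ.injective hi
      have hmem := Equiv.Perm.mem_sumCongrHom_range_of_perm_mapsTo_inl hmaps
      refine (Quotient.sound' ?_).symm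
      rw [QuotientGroup.leftRel_apply]
      simpa using hmem
  · simp

/-- The linear extension of `shuffleMap` to the exterior algebra of `F`, zero outside degree `a + r`.
When `p ∘ f` is multiplication by `s`, it induces a left inverse of `gradedMap` up to the factor
`s ^ a`. -/
noncomputable def wedgeRetraction (p : F →ₗ[R] E) (g : F →ₗ[R] M) (a r : ℕ) :
    ExteriorAlgebra R F →ₗ[R] (⋀[R]^a E ⊗[R] ⋀[R]^r M) :=
  ExteriorAlgebra.liftAlternating (R := R) (M := F) (N := ⋀[R]^a E ⊗[R] ⋀[R]^r M)
    (Pi.single (a + r) ((shuffleMap p g a r).domDomCongr finSumFinEquiv))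

theorem wedgeRetraction_ιMulti (p : F →ₗ[R] E) (g : F →ₗ[R] M) {a r n : ℕ} (h : n = a + r)
    (v : Fin n → F) : wedgeRetraction p g a r (ιMulti R n v) =
      shuffleMap p g a r fun i => v (Fin.cast h.symm (finSumFinEquiv i)) := by
  subst h
  rw [wedgeRetraction, liftAlternating_apply_ιMulti, Pi.single_eq_same]
  rfl

theorem wedgeRetraction_eq_zero (p : F →ₗ[R] E) {f : E →ₗ[R] F} {g : F →ₗ[R] M} (hfg : g ∘ₗ f = 0)
    (a r : ℕ) (y : ExteriorAlgebra R F) (hy : y ∈ prevStep f a r) :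
    wedgeRetraction p g a r y = 0 := by
  revert y
  change prevStep f a r ≤ LinearMap.ker (wedgeRetraction p g a r)
  cases r with
  | zero => exact bot_le
  | succ r =>
    rw [prevStep, wedgeStep_eq_span, Submodule.span_le]
    rintro _ ⟨⟨e, x⟩, rfl⟩
    have hn : a + 1 + r = a + (r + 1) := by lia
    rw [SetLike.mem_coe, LinearMap.mem_ker]
    dsimp only
    rw [wedgeRetraction_ιMulti p g hn]
    refine shuffleMap_eq_zero p g _
      (fun i => finSumFinEquiv.symm (Fin.cast hn (Fin.castAdd r i))) ?_ fun i => ?_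
    · intro i i' hii
      simpa using hii
    · simpa using LinearMap.congr_fun hfg (e i)

theorem smul_eq_zero_of_retraction {A T κ : Type*} [AddCommGroup A] [Module R A] [AddCommGroup T]
    [Module R T] (H : Submodule R A) (φ : T →ₗ[R] A ⧸ H) (ψ : A →ₗ[R] T)
    (hψ : ∀ y ∈ H, ψ y = 0) (c : R) (v : κ → T) (hv : Submodule.span R (Set.range v) = ⊤)
    (w : κ → A) (h₁ : ∀ i, φ (v i) = H.mkQ (w i)) (h₂ : ∀ i, ψ (w i) = c • v i) (t : T)
    (ht : φ t = 0) : c • t = 0 := by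
  have key : H.liftQ ψ hψ ∘ₗ φ = c • LinearMap.id :=
    LinearMap.ext_on_range hv fun i => by
      rw [LinearMap.comp_apply, h₁]
      exact h₂ i
  have := LinearMap.congr_fun key t
  rw [LinearMap.comp_apply, ht, map_zero] at this
  exact this.symm

/-- Where `f` splits up to the scalar `s`, the kernel of `gradedMap` is killed by `s ^ a`. -/
theorem smul_eq_zero_of_gradedMap_eq_zero {f : E →ₗ[R] F} {g : F →ₗ[R] M}
    (hg : Function.Surjective g) (hfg : LinearMap.range f = LinearMap.ker g) {s : R}
    (p : F →ₗ[R] E) (hp : p ∘ₗ f = s • LinearMap.id) (a r : ℕ) (t : ⋀[R]^a E ⊗[R] ⋀[R]^r M)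
    (ht : gradedMap f g hg hfg a r t = 0) : s ^ a • t = 0 := by
  have hfg' : g ∘ₗ f = 0 := LinearMap.range_le_ker_iff.1 hfg.le
  refine smul_eq_zero_of_retraction (T := ⋀[R]^a E ⊗[R] ⋀[R]^r M) (prevStep f a r)
    (gradedMap f g hg hfg a r) (wedgeRetraction p g a r) (wedgeRetraction_eq_zero p hfg' a r) (s ^ a) _
    (span_tmul_ιMulti hg a r) _ (fun q => gradedMap_tmul f g hg hfg q.1 q.2) ?_ t ht
  rintro ⟨e, x⟩
  rw [wedgeRetraction_ιMulti p g rfl]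
  have h1 : (fun i => Fin.append (f ∘ e) x (Fin.cast rfl (finSumFinEquiv i))) =
      Sum.elim (f ∘ e) x := by
    ext i
    rcases i with i | i <;> simp
  have h2 : p ∘ f ∘ e = fun i => s • e i := funext fun i => LinearMap.congr_fun hp (e i)
  rw [h1, shuffleMap_sumElim p hfg', h2, AlternatingMap.map_smul_univ]
  simp [TensorProduct.smul_tmul']

/-- For `a = 0` the graded map is always injective: the retraction `p = 0` has `s = 0`, and
`0 ^ 0 = 1`. -/
theorem gradedMap_injective_zero {f : E →ₗ[R] F} {g : F →ₗ[R] M}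
    (hg : Function.Surjective g) (hfg : LinearMap.range f = LinearMap.ker g) (r : ℕ) :
    Function.Injective (gradedMap f g hg hfg 0 r) := by
  rw [injective_iff_map_eq_zero]
  intro t ht
  simpa using smul_eq_zero_of_gradedMap_eq_zero hg hfg (s := 0) 0 (by simp) 0 r t ht

/-- The isomorphism `G^r / G^{r-1} ≃ Λ^a E ⊗ Λ^r M`, once `gradedMap` is known to be injective. -/
noncomputable def gradedEquiv {f : E →ₗ[R] F} {g : F →ₗ[R] M}
    (hg : Function.Surjective g) (hfg : LinearMap.range f = LinearMap.ker g) (a r : ℕ)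
    (h : Function.Injective (gradedMap f g hg hfg a r)) :
    (wedgeStep f a r ⧸ (prevStep f a r).comap (wedgeStep f a r).subtype) ≃ₗ[R]
      (⋀[R]^a E ⊗[R] ⋀[R]^r M) :=
  (Submodule.quotEquivOfEq _ _ (by rw [LinearMap.ker_comp, Submodule.ker_mkQ])).trans <|
    (LinearMap.quotKerEquivRange ((prevStep f a r).mkQ ∘ₗ (wedgeStep f a r).subtype)).trans <|
    (LinearEquiv.ofEq _ _
      (by rw [LinearMap.range_comp, Submodule.range_subtype, range_gradedMap])).trans
      (LinearEquiv.ofInjective _ h).symm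
end Retraction

/-! ### The kernel of the graded maps is supported on the closed subset -/

section Splitting
variable {R E F M : Type*} [CommRing R] [AddCommGroup E] [Module R E] [AddCommGroup F] [Module R F]
  [AddCommGroup M] [Module R M]

/-- At a prime where `M` is free, a section of the localization of `g` has, after clearing
denominators, a lift to a map `M → F` that is a section of `g` up to some `s ∉ P`. -/
theorem exists_section_up_to_smul [Module.FinitePresentation R M] (g : F →ₗ[R] M)
    (hg : Function.Surjective g) (P : Ideal R) [P.IsPrime]
    (hP : Module.Free (Localization.AtPrime P) (LocalizedModule P.primeCompl M)) :
    ∃ s ∉ P, ∃ h : M →ₗ[R] F, g ∘ₗ h = s • LinearMap.id := by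
  let S := P.primeCompl
  let gS : LocalizedModule S F →ₗ[Localization S] LocalizedModule S M := LocalizedModule.map S g
  have hgS : Function.Surjective gS := LocalizedModule.map_surjective S g hg
  have : Module.Projective (Localization S) (LocalizedModule S M) :=
    @Module.Projective.of_free _ _ _ _ _ hP
  obtain ⟨σ, hσ⟩ := Module.projective_lifting_property gS LinearMap.id hgS
  obtain ⟨h, s, hs⟩ := Module.FinitePresentation.exists_lift_of_isLocalizedModule S
    (LocalizedModule.mkLinearMap S F) ((σ.restrictScalars R) ∘ₗ LocalizedModule.mkLinearMap S M)
  have h1 : LocalizedModule.mkLinearMap S M ∘ₗ (g ∘ₗ h) =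
      LocalizedModule.mkLinearMap S M ∘ₗ (s.1 • LinearMap.id) := by
    ext x
    have h2 : gS (LocalizedModule.mkLinearMap S F (h x)) =
        LocalizedModule.mkLinearMap S M (g (h x)) := by simp [gS]
    have h3 : LocalizedModule.mkLinearMap S F (h x) =
        s.1 • σ (LocalizedModule.mkLinearMap S M x) := LinearMap.congr_fun hs x
    have h4 : gS (σ (LocalizedModule.mkLinearMap S M x)) = LocalizedModule.mkLinearMap S M x :=
      LinearMap.congr_fun hσ _
    have h5 := (gS.restrictScalars R).map_smul s.1 (σ (LocalizedModule.mkLinearMap S M x))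
    rw [LinearMap.restrictScalars_apply, LinearMap.restrictScalars_apply, ← h3, h2, h4] at h5
    simpa using h5
  obtain ⟨t, ht⟩ := Module.Finite.exists_smul_of_comp_eq_of_isLocalizedModule S
    (LocalizedModule.mkLinearMap S M) _ _ h1
  refine ⟨t.1 * s.1, (t * s).2, t.1 • h, ?_⟩
  rw [LinearMap.comp_smul, mul_smul]
  exact ht

/-- The retraction is `f⁻¹ ∘ (s - h ∘ g)`. -/
theorem exists_retraction_up_to_smul (f : E →ₗ[R] F) (hf : Function.Injective f) (g : F →ₗ[R] M)
    (hfg : LinearMap.range f = LinearMap.ker g) (s : R) (h : M →ₗ[R] F)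
    (hh : g ∘ₗ h = s • LinearMap.id) : ∃ p : F →ₗ[R] E, p ∘ₗ f = s • LinearMap.id := by
  have hmem (x : F) : (s • LinearMap.id - h ∘ₗ g : F →ₗ[R] F) x ∈ LinearMap.range f := by
    rw [hfg, LinearMap.mem_ker]
    have : g (h (g x)) = s • g x := LinearMap.congr_fun hh (g x)
    simp [this]
  refine ⟨(LinearEquiv.ofInjective f hf).symm.toLinearMap ∘ₗ LinearMap.codRestrict _ _ hmem, ?_⟩
  ext e
  apply hf
  have h0 : g (f e) = 0 := by
    rw [← LinearMap.mem_ker, ← hfg]; exact ⟨e, rfl⟩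
  have h1 (y : LinearMap.range f) : f ((LinearEquiv.ofInjective f hf).symm y) = y :=
    congrArg Subtype.val ((LinearEquiv.ofInjective f hf).apply_symm_apply y)
  simp [h1, h0]

/-- The kernel of `gradedMap` is supported on `V(J)`: for each prime `P` not containing `J`, some
power of an `s ∉ P` kills it. -/
theorem exists_pow_le_annihilator_ker [IsNoetherianRing R] [Module.Finite R E] [Module.Finite R M]
    (J : Ideal R) (f : E →ₗ[R] F) (g : F →ₗ[R] M)
    (hf : Function.Injective f) (hg : Function.Surjective g)
    (hfg : LinearMap.range f = LinearMap.ker g)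
    (hloc : ∀ (P : Ideal R) [P.IsPrime], ¬ J ≤ P →
      Module.Free (Localization.AtPrime P) (LocalizedModule P.primeCompl M)) (a r : ℕ) :
    ∃ n : ℕ, J ^ n ≤ Module.annihilator R (LinearMap.ker (gradedMap f g hg hfg a r)) := by
  have : Module.FinitePresentation R M := Module.finitePresentation_of_finite R M
  refine Ideal.exists_pow_le_of_le_radical_of_fg ?_ (IsNoetherian.noetherian J)
  rw [Ideal.radical_eq_sInf]
  refine le_sInf fun P ⟨hle, hP⟩ => ?_
  by_contra hJP
  obtain ⟨s, hs, h, hh⟩ := exists_section_up_to_smul g hg P (hloc P hJP)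
  obtain ⟨p, hp⟩ := exists_retraction_up_to_smul f hf g hfg s h hh
  refine hs (hP.mem_of_pow_mem a (hle ?_))
  rw [Module.mem_annihilator]
  rintro ⟨t, ht⟩
  exact Subtype.ext (smul_eq_zero_of_gradedMap_eq_zero hg hfg p hp a r t ht)
end Splitting

/-! ### Depth of the exterior powers -/

section Main
variable {R : Type u} [CommRing R] {J : Ideal R}

variable {E F M : Type u} [AddCommGroup E] [Module R E] [AddCommGroup F] [Module R F]
    [AddCommGroup M] [Module R M]

theorem exact_inclusion_mkQ {N : Type*} [AddCommGroup N] [Module R N] {H G : Submodule R N}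
    (h : H ≤ G) : Function.Exact (Submodule.inclusion h) (H.comap G.subtype).mkQ := by
  rw [LinearMap.exact_iff, Submodule.ker_mkQ, Submodule.range_inclusion]

theorem DepthGE.of_graded {k : ℕ} {f : E →ₗ[R] F} {g : F →ₗ[R] M}
    (hg : Function.Surjective g) (hfg : LinearMap.range f = LinearMap.ker g) {a r : ℕ}
    (hi : Function.Injective (gradedMap f g hg hfg a r))
    (h₁ : DepthGE J (.of R (prevStep f a r)) k)
    (h₂ : DepthGE J (.of R (⋀[R]^a E ⊗[R] ⋀[R]^r M)) k) :
    DepthGE J (.of R (wedgeStep f a r)) k :=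
  .middle' (Submodule.inclusion (prevStep_le f a r)) _ (Submodule.inclusion_injective _)
    (exact_inclusion_mkQ _) (Submodule.mkQ_surjective _) h₁
    (h₂.of_linearEquiv (gradedEquiv hg hfg a r hi).symm)

variable [IsNoetherianRing R] [Module.Free R E] [Module.Finite R E]
    [Module.Finite R F]

/-- The source `Λ^a E ⊗ Λ^r M` is a finite power of `Λ^r M`, hence has no submodule supported on
`V(J)` when `Λ^r M` has positive depth. -/
theorem gradedMap_injective (f : E →ₗ[R] F) (g : F →ₗ[R] M)
    (hf : Function.Injective f) (hg : Function.Surjective g)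
    (hfg : LinearMap.range f = LinearMap.ker g)
    (hloc : ∀ (P : Ideal R) [P.IsPrime], ¬ J ≤ P →
      Module.Free (Localization.AtPrime P) (LocalizedModule P.primeCompl M)) (a r : ℕ)
    (h : DepthGE J (.of R (⋀[R]^r M)) 1) : Function.Injective (gradedMap f g hg hfg a r) := by
  have : Module.Finite R M := Module.Finite.of_surjective g hg
  have hK : LinearMap.ker (gradedMap f g hg hfg a r) = ⊥ :=
    (h.tensor (L := ⋀[R]^a E)).eq_bot _ (exists_pow_le_annihilator_ker J f g hf hg hfg hloc a r)
  rw [injective_iff_map_eq_zero]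
  exact fun t ht => (Submodule.eq_bot_iff _).1 hK t ht

/-- If `R` has depth at least `k` along `V(J)`, then `Λ^m M` has depth at least `k - m`. Truncated
subtraction is harmless: for `k ≤ m` nothing is claimed. -/
theorem depthGE_exteriorPower [Module.Free R F] (k : ℕ) (f : E →ₗ[R] F) (g : F →ₗ[R] M)
    (hf : Function.Injective f) (hg : Function.Surjective g)
    (hfg : LinearMap.range f = LinearMap.ker g)
    (hloc : ∀ (P : Ideal R) [P.IsPrime], ¬ J ≤ P →
      Module.Free (Localization.AtPrime P) (LocalizedModule P.primeCompl M))
    (hR : DepthGE J (.of R R) k) (m : ℕ) : DepthGE J (.of R (⋀[R]^m M)) (k - m) := by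
  induction m using Nat.strong_induction_on with
  | _ m ih =>
  by_cases hm : k ≤ m
  · rw [Nat.sub_eq_zero_of_le hm]
    exact fun i hi => absurd hi (by simp)
  push Not at hm
  -- below the top, each step of the filtration on `Λ^m F` is an extension of known modules
  have step : ∀ r a, a + r = m → 1 ≤ a → DepthGE J (.of R (wedgeStep f a r)) (k - r) := by
    intro r
    induction r with
    | zero =>
      intro a har ha
      exact .of_graded hg hfg (gradedMap_injective f g hf hg hfg hloc a 0
        ((ih 0 (by lia)).mono (by lia))) (DepthGE.bot _) (ih 0 (by lia)).tensor
    | succ r ihr =>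
      intro a har ha
      exact .of_graded hg hfg (gradedMap_injective f g hf hg hfg hloc a (r + 1)
        ((ih (r + 1) (by lia)).mono (by lia)))
        ((ihr (a + 1) (by lia) (by lia)).mono (by lia)) (ih (r + 1) (by lia)).tensor
  have hprev : DepthGE J (.of R (prevStep f 0 m)) (k - m + 1) := by
    cases m with
    | zero => exact .bot _
    | succ r => exact (step r 1 (by lia) le_rfl).mono (by lia)
  have htop : DepthGE J (.of R (wedgeStep f 0 m)) (k - m) := by
    have : wedgeStep f 0 m = ⋀[R]^m F := by rw [wedgeStep, pow_zero, one_mul]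
    exact ((hR.mono (by lia)).free (L := ⋀[R]^m F)).of_linearEquiv (LinearEquiv.ofEq _ _ this.symm)
  -- `Λ^m M ≃ Λ^m F / G^{m-1}`, and `G^{m-1}` has depth at least `k - (m - 1)`
  have hq := DepthGE.right' (Submodule.inclusion (prevStep_le f 0 m)) _
    (Submodule.inclusion_injective _) (exact_inclusion_mkQ _) (Submodule.mkQ_surjective _)
    hprev htop
  exact hq.of_linearEquiv ((gradedEquiv hg hfg 0 m (gradedMap_injective_zero hg hfg m)).trans
    ((TensorProduct.congr (exteriorPower.zeroEquiv R E) (LinearEquiv.refl R _)).trans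
      (TensorProduct.lid R _)))
end Main

/-- affine-local form, with depth expressed via local cohomology along
`Z = V(J)`: given `0 → E → F → M → 0` with `E, F` finite free and `M` free at every prime
outside `Z`, if `H^i_Z(R) = 0` for `i < k` (depth ≥ k along Z) then
`H^i_Z(Λ^m M) = 0` for `i < k − m` (depth of `Λ^m M` ≥ k − m along Z); moreover if
`k ≥ m + 1` then for `1 ≤ r < m` the wedge-filtration graded piece `G^r/G^{r−1}` of
`Λ^m F` is isomorphic to `Λ^{m−r}E ⊗ Λ^r M`. -/
theorem stmt_17 (R : Type u) [CommRing R] [IsNoetherianRing R] (J : Ideal R) (k m : ℕ)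
    (E F M : Type u) [AddCommGroup E] [Module R E] [AddCommGroup F] [Module R F]
    [AddCommGroup M] [Module R M]
    [Module.Free R E] [Module.Finite R E] [Module.Free R F] [Module.Finite R F]
    (f : E →ₗ[R] F) (g : F →ₗ[R] M)
    (hf : Function.Injective f) (hg : Function.Surjective g)
    (hfg : LinearMap.range f = LinearMap.ker g)
    (hloc : ∀ (P : Ideal R) [P.IsPrime], ¬ J ≤ P →
      Module.Free (Localization.AtPrime P) (LocalizedModule P.primeCompl M))
    (hdepth : ∀ i < k, Subsingleton ((localCohomology J i).obj (ModuleCat.of R R))) :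
    (∀ i, i + m < k →
      Subsingleton ((localCohomology J i).obj (ModuleCat.of R ↥(⋀[R]^m M))))
    ∧ (m + 1 ≤ k → ∀ r, 1 ≤ r → r < m →
        Nonempty
          ((↥((LinearMap.range ((ι R).comp f) ^ (m - r) *
                LinearMap.range (ι R : F →ₗ[R] ExteriorAlgebra R F) ^ r :
              Submodule R (ExteriorAlgebra R F))) ⧸
            Submodule.comap
              ((LinearMap.range ((ι R).comp f) ^ (m - r) *
                LinearMap.range (ι R : F →ₗ[R] ExteriorAlgebra R F) ^ r :
              Submodule R (ExteriorAlgebra R F))).subtype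
              (LinearMap.range ((ι R).comp f) ^ (m - (r - 1)) *
                LinearMap.range (ι R : F →ₗ[R] ExteriorAlgebra R F) ^ (r - 1)))
          ≃ₗ[R] (⋀[R]^(m - r) E ⊗[R] ⋀[R]^r M))) := by
  have hR := depthGE_of_localCohomology hdepth
  have hD := depthGE_exteriorPower k f g hf hg hfg hloc hR
  refine ⟨fun i hi => subsingleton_localCohomology_of_depthGE (hD m) i (by lia), ?_⟩
  intro hm r hr hrm
  obtain ⟨r, rfl⟩ := Nat.exists_eq_add_of_le' hr
  have hidx : m - (r + 1 - 1) = m - (r + 1) + 1 := by lia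
  rw [hidx]
  exact ⟨gradedEquiv hg hfg (m - (r + 1)) (r + 1)
    (gradedMap_injective f g hf hg hfg hloc _ _ ((hD (r + 1)).mono (by lia)))⟩
end
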